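/- arXiv:1508.06132 — 4 statements merged into one kernel-verified Lean document; each statement's English description precedes it below -/
import Mathlib

section
/- The exponential measure μ on ℝⁿ satisfies Carleman's condition: for each i = 1,…,n, the series ∑_{k=1}^∞ (∫ x_i^{2k} dμ(x))^{−1/(2k)} diverges to +∞. -/
open MeasureTheory MvPolynomial Filter Topology

noncomputable def gaussianMeasure (n : ℕ) : Measure (Fin n → ℝ) :=
  volume.withDensity fun x =>
    ENNReal.ofReal ((2 * Real.pi) ^ (-(n : ℝ) / 2) * Real.exp (-(∑ i, x i ^ 2) / 2))

noncomputable def expMeasure (n : ℕ) : Measure (Fin n → ℝ) :=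
  (volume.restrict {x : Fin n → ℝ | ∀ i, 0 ≤ x i}).withDensity fun x =>
    ENNReal.ofReal (Real.exp (-(∑ i, x i)))

/-- degree |α| of a multi-index -/
def fdeg {n : ℕ} (α : Fin n →₀ ℕ) : ℕ := α.sum fun _ e => e

/-- Riesz functional `L_u(p)` of a (pseudo-)moment sequence `u`. -/
noncomputable def riesz {n : ℕ} (u : (Fin n →₀ ℕ) → ℝ) (p : MvPolynomial (Fin n) ℝ) : ℝ :=
  ∑ α ∈ p.support, p.coeff α * u α

/-- Positive semidefiniteness of the moment matrix `M_d(u)`, expressed via its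
quadratic form: `L_u(p²) ≥ 0` for all polynomials of degree at most `d`. -/
def MomPSD {n : ℕ} (d : ℕ) (u : (Fin n →₀ ℕ) → ℝ) : Prop :=
  ∀ p : MvPolynomial (Fin n) ℝ, p.totalDegree ≤ d → 0 ≤ riesz u (p ^ 2)

/-- Positive semidefiniteness of the localizing matrix `M_k(g u)`, expressed via its
quadratic form: `L_u(g·p²) ≥ 0` for all polynomials of degree at most `k`. -/
def LocPSD {n : ℕ} (k : ℕ) (g : MvPolynomial (Fin n) ℝ) (u : (Fin n →₀ ℕ) → ℝ) : Prop :=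
  ∀ p : MvPolynomial (Fin n) ℝ, p.totalDegree ≤ k → 0 ≤ riesz u (g * p ^ 2)

/-- moments of the standard Gaussian measure -/
noncomputable def gmom (n : ℕ) (α : Fin n →₀ ℕ) : ℝ :=
  ∫ x, (∏ i, x i ^ α i) ∂gaussianMeasure n

/-- `d_j = ⌈deg g / 2⌉` -/
def dHalf {n : ℕ} (g : MvPolynomial (Fin n) ℝ) : ℕ := (g.totalDegree + 1) / 2

/-- the basic closed semi-algebraic set determined by the polynomials `g_j` -/
def semialg {n m : ℕ} (g : Fin m → MvPolynomial (Fin n) ℝ) : Set (Fin n → ℝ) :=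
  {x | ∀ j, 0 ≤ eval x (g j)}

/-- feasibility for the primal semidefinite relaxation of order `d` (Gaussian measure) -/
def Feasible {n m : ℕ} (g : Fin m → MvPolynomial (Fin n) ℝ) (d : ℕ)
    (u v : (Fin n →₀ ℕ) → ℝ) : Prop :=
  (∀ α : Fin n →₀ ℕ, fdeg α ≤ 2 * d → u α + v α = gmom n α) ∧
  MomPSD d u ∧ MomPSD d v ∧ ∀ j, LocPSD (d - dHalf (g j)) (g j) u

/-- the value `ō_d(f)` of the primal semidefinite relaxation of order `d` -/
noncomputable def obar {n m : ℕ} (g : Fin m → MvPolynomial (Fin n) ℝ) (d : ℕ)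
    (f : MvPolynomial (Fin n) ℝ) : ℝ :=
  sSup {r | ∃ u v, Feasible g d u v ∧ r = riesz u f}

/-- the Stokes polynomial `p_{i,α} = ∂(x^α f)/∂x_i − x_i · x^α f` (Gaussian case) -/
noncomputable def pStokesG {n : ℕ} (f : MvPolynomial (Fin n) ℝ) (i : Fin n) (α : Fin n →₀ ℕ) :
    MvPolynomial (Fin n) ℝ :=
  pderiv i (monomial α 1 * f) - X i * (monomial α 1 * f)

/-- the Stokes polynomial `p_{i,α} = ∂(x^α f)/∂x_i − x^α f` (exponential case) -/
noncomputable def pStokesE {n : ℕ} (f : MvPolynomial (Fin n) ℝ) (i : Fin n) (α : Fin n →₀ ℕ) :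
    MvPolynomial (Fin n) ℝ :=
  pderiv i (monomial α 1 * f) - monomial α 1 * f

/-- feasibility for the Stokes-augmented semidefinite relaxation of order `d` -/
def FeasibleS {n m : ℕ} (g : Fin m → MvPolynomial (Fin n) ℝ) (f : MvPolynomial (Fin n) ℝ)
    (d : ℕ) (u v : (Fin n →₀ ℕ) → ℝ) : Prop :=
  Feasible g d u v ∧
  ∀ (i : Fin n) (α : Fin n →₀ ℕ), (pStokesG f i α).totalDegree ≤ 2 * d →
    riesz u (pStokesG f i α) = 0

/-- the value `ω̄_d` of the Stokes-augmented semidefinite relaxation of order `d` -/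
noncomputable def omegabar {n m : ℕ} (g : Fin m → MvPolynomial (Fin n) ℝ)
    (f : MvPolynomial (Fin n) ℝ) (d : ℕ) : ℝ :=
  sSup {r | ∃ u v, FeasibleS g f d u v ∧ r = u 0}

/-- `p ∈ Σ[x]_d`: `p` is a sum of squares of polynomials of degree at most `d` -/
def IsSOS {n : ℕ} (d : ℕ) (p : MvPolynomial (Fin n) ℝ) : Prop :=
  ∃ (k : ℕ) (q : Fin k → MvPolynomial (Fin n) ℝ),
    (∀ i, (q i).totalDegree ≤ d) ∧ p = ∑ i, q i ^ 2

/-- membership in the truncated quadratic module `Q_{2d}(Ω)` -/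
def InQM {n m : ℕ} (g : Fin m → MvPolynomial (Fin n) ℝ) (d : ℕ)
    (p : MvPolynomial (Fin n) ℝ) : Prop :=
  ∃ (σ₀ : MvPolynomial (Fin n) ℝ) (σ : Fin m → MvPolynomial (Fin n) ℝ),
    IsSOS d σ₀ ∧ (∀ j, IsSOS (d - dHalf (g j)) (σ j)) ∧ p = σ₀ + ∑ j, σ j * g j

theorem expMeasure_moment (n : ℕ) (i : Fin n) (m : ℕ) :
    ∫ x, x i ^ m ∂expMeasure n = (m.factorial : ℝ) := by
  have hset : {x : Fin n → ℝ | ∀ i, 0 ≤ x i} = Set.univ.pi (fun _ => Set.Ici (0:ℝ)) := by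
    ext x; simp only [Set.mem_ofPred_eq, Set.mem_pi, Set.mem_univ, Set.mem_Ici, forall_true_left]
  have hg : ∀ p : ℕ, ∫ t in Set.Ici (0:ℝ), Real.exp (-t) * t ^ p = (p.factorial : ℝ) := by
    intro p
    rw [integral_Ici_eq_integral_Ioi, ← Real.Gamma_nat_eq_factorial,
      Real.Gamma_eq_integral (by positivity)]
    refine setIntegral_congr_fun measurableSet_Ioi (fun t _ => ?_)
    simp
  unfold expMeasure
  rw [integral_withDensity_eq_integral_toReal_smul (by fun_prop) (by simp), hset,
    volume_pi, Measure.restrict_pi_pi]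
  have h : ∀ x : Fin n → ℝ,
      (ENNReal.ofReal (Real.exp (-(∑ i, x i)))).toReal • x i ^ m
        = ∏ j, (Real.exp (-(x j)) * (x j) ^ (if j = i then m else 0)) := by
    intro x
    rw [ENNReal.toReal_ofReal (Real.exp_pos _).le, Finset.prod_mul_distrib, ← Real.exp_sum,
      Finset.sum_neg_distrib, smul_eq_mul]
    simp [pow_ite]
  simp_rw [h]
  rw [integral_fintype_prod_eq_prod (𝕜 := ℝ)
    (f := fun j t => Real.exp (-t) * t ^ (if j = i then m else 0))]
  simp_rw [hg]
  simp [apply_ite Nat.factorial]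

/-- the exponential measure on ℝⁿ satisfies Carleman's condition:
for each coordinate `i`, `∑_{k≥1} (∫ x_i^{2k} dμ)^{−1/(2k)} = +∞`. -/
theorem stmt4 (n : ℕ) (i : Fin n) :
    Tendsto (fun N : ℕ => ∑ k ∈ Finset.Icc 1 N,
        (∫ x, x i ^ (2 * k) ∂expMeasure n) ^ (-(1 : ℝ) / (2 * (k : ℝ))))
      atTop atTop := by
  simp_rw [expMeasure_moment]
  have h1 : Tendsto (fun N : ℕ => (1/2 : ℝ) * ∑ k ∈ Finset.range N, (1 / ((k:ℝ) + 1)))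
      atTop atTop :=
    Real.tendsto_sum_range_one_div_nat_succ_atTop.const_mul_atTop (by norm_num)
  refine tendsto_atTop_mono (fun N => ?_) h1
  have h2 : Finset.Icc 1 N = Finset.Ico (0 + 1) (N + 1) := by
    ext; simp
  rw [h2, ← Finset.sum_Ico_add' _ 0 N 1, Finset.mul_sum, Finset.range_eq_Ico]
  refine Finset.sum_le_sum (fun k _ => ?_)
  have hk : (0:ℝ) < 2 * ((k + 1 : ℕ) : ℝ) := by positivity
  have hf : (((2 * (k + 1)).factorial : ℕ) : ℝ)
      ≤ (2 * ((k + 1 : ℕ) : ℝ)) ^ (2 * ((k + 1 : ℕ) : ℝ)) := by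
    have := Nat.factorial_le_pow (2 * (k + 1))
    have h3 : (2 * ((k + 1 : ℕ) : ℝ)) = ((2 * (k + 1) : ℕ) : ℝ) := by push_cast; ring
    rw [h3, Real.rpow_natCast]
    exact_mod_cast this
  calc (1/2 : ℝ) * (1 / ((k:ℝ) + 1)) = (2 * ((k + 1 : ℕ) : ℝ)) ^ (-1 : ℝ) := by
        rw [Real.rpow_neg_one]; push_cast; field_simp
    _ = ((2 * ((k + 1 : ℕ) : ℝ)) ^ (2 * ((k + 1 : ℕ) : ℝ))) ^
          (-(1 : ℝ) / (2 * ((k + 1 : ℕ) : ℝ))) := by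
        rw [← Real.rpow_mul hk.le, mul_div_cancel₀ _ hk.ne']
    _ ≤ _ := by
        refine Real.rpow_le_rpow_of_nonpos (by positivity) hf ?_
        exact div_nonpos_of_nonpos_of_nonneg (by norm_num) hk.le
end

section
/- Let μ be the standard Gaussian measure on ℝⁿ, let Ω = {x ∈ ℝⁿ : g_j(x) ≥ 0, j = 1,…,m}, and assume both Ω and ℝⁿ ∖ Ω have nonempty interior. Let f ∈ ℝ[x] be a polynomial that is strictly positive almost everywhere on Ω. Then for every d ≥ d₀, the primal semidefinite program defining ō_d(f) attains its supremum, the dual program defining ō*_d(f) attains its infimum, and strong duality holds: ō_d(f) = ō*_d(f). -/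
open MeasureTheory MvPolynomial Filter Topology

theorem isCompact_convexHull_aux {E : Type*} [NormedAddCommGroup E] [NormedSpace ℝ E]
    [FiniteDimensional ℝ E] {K : Set E} (hK : IsCompact K) : IsCompact (convexHull ℝ K) := by
  classical
  set N := Module.finrank ℝ E + 1 with hN
  have key : convexHull ℝ K = (fun p : (Fin N → ℝ) × (Fin N → E) => ∑ i, p.1 i • p.2 i) ''
      ((stdSimplex ℝ (Fin N)) ×ˢ (Set.pi Set.univ fun _ => K)) := by
    apply Set.Subset.antisymm
    · intro x hx
      obtain ⟨ι, hι, z, w, hz, hai, hw, hw1, hx⟩ := eq_pos_convex_span_of_mem_convexHull hx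
      have hcard : Fintype.card ι ≤ N := by
        have := hai.card_le_finrank_succ
        refine this.trans ?_
        rw [hN]
        exact Nat.succ_le_succ (Submodule.finrank_le _)
      have hne : Nonempty ι := by
        by_contra h
        rw [not_nonempty_iff] at h
        simp at hw1
      obtain ⟨i0⟩ := hne
      obtain ⟨e⟩ : Nonempty (ι ↪ Fin N) := by
        apply Function.Embedding.nonempty_of_card_le
        simpa using hcard
      have hinj := e.injective
      refine ⟨(fun j => if h : ∃ i, e i = j then w h.choose else 0,
        fun j => if h : ∃ i, e i = j then z h.choose else z i0), ⟨⟨?_, ?_⟩, ?_⟩, ?_⟩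
      · intro j
        dsimp only
        split_ifs
        · exact (hw _).le
        · exact le_rfl
      · rw [← hw1]
        symm
        apply Finset.sum_of_injOn e hinj.injOn
        · simp
        · intro j _ hj
          have : ¬ ∃ i, e i = j := by simpa using hj
          simp [this]
        · intro i _
          have h : ∃ i', e i' = e i := ⟨i, rfl⟩
          have h2 : h.choose = i := hinj h.choose_spec
          simp only [dif_pos h, h2]
      · intro j _
        dsimp only
        split_ifs
        · exact hz ⟨_, rfl⟩
        · exact hz ⟨_, rfl⟩
      · rw [← hx]
        symm
        apply Finset.sum_of_injOn e hinj.injOn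
        · simp
        · intro j _ hj
          have : ¬ ∃ i, e i = j := by simpa using hj
          simp [this]
        · intro i _
          have h : ∃ i', e i' = e i := ⟨i, rfl⟩
          have h2 : h.choose = i := hinj h.choose_spec
          simp only [dif_pos h, h2]
    · rintro _ ⟨⟨w, z⟩, ⟨hw, hz⟩, rfl⟩
      exact (convex_convexHull ℝ K).sum_mem (fun i _ => hw.1 i) hw.2
        (fun i _ => subset_convexHull ℝ K (hz i trivial))
  rw [key]
  apply IsCompact.image
  · exact (isCompact_stdSimplex ℝ _).prod (isCompact_univ_pi fun _ => hK)
  · fun_prop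

/-- Separation from a convex cone generated by a compact set in an open half-space. -/
theorem cone_alt {E : Type*} [NormedAddCommGroup E] [NormedSpace ℝ E]
    [FiniteDimensional ℝ E] {S C : Set E} (hS : IsCompact S) (l : E →L[ℝ] ℝ)
    (hl : ∀ s ∈ S, 0 < l s) (hSC : S ⊆ C) (hconv : Convex ℝ C) (h0 : (0:E) ∈ C)
    (hsm : ∀ c : ℝ, 0 ≤ c → ∀ x ∈ C, c • x ∈ C) (y : E) (hy : y ∉ C) :
    ∃ w : E →L[ℝ] ℝ, (∀ s ∈ S, 0 ≤ w s) ∧ w y < 0 := by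
  set S' : Set E := (fun s => (l s)⁻¹ • s) '' S with hS'
  have hS'c : IsCompact S' := by
    apply hS.image_of_continuousOn
    apply ContinuousOn.smul
    · exact l.continuous.continuousOn.inv₀ (fun s hs => (hl s hs).ne')
    · exact continuousOn_id
  have hKc := isCompact_convexHull_aux hS'c
  set K := convexHull ℝ S' with hK
  have hKC : K ⊆ C := by
    apply convexHull_min _ hconv
    rintro _ ⟨s, hs, rfl⟩
    exact hsm _ (inv_nonneg.2 (hl s hs).le) _ (hSC hs)
  have hSK : ∀ s ∈ S, (l s)⁻¹ • s ∈ K := fun s hs => subset_convexHull ℝ _ ⟨s, hs, rfl⟩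
  rcases lt_trichotomy (l y) 0 with h | h | h
  · exact ⟨l, fun s hs => (hl s hs).le, h⟩
  · have hy0 : y ≠ 0 := fun h => hy (h ▸ h0)
    obtain ⟨w1, hw1⟩ := SeparatingDual.exists_eq_one (R := ℝ) hy0
    obtain ⟨M, hM⟩ := (hKc.image w1.continuous).bddAbove
    refine ⟨M • l - w1, fun s hs => ?_, by simp [h, hw1]⟩
    have := hM ⟨_, hSK s hs, rfl⟩
    have h2 := hl s hs
    simp only [map_smul, smul_eq_mul] at this
    rw [inv_mul_le_iff₀ h2] at this
    simp
    linarith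
  · have hyK : (l y)⁻¹ • y ∉ K := by
      intro hh
      apply hy
      have := hsm (l y) h.le _ (hKC hh)
      rwa [smul_smul, mul_inv_cancel₀ h.ne', one_smul] at this
    obtain ⟨w, c, h1, h2⟩ := geometric_hahn_banach_point_closed (convex_convexHull ℝ S')
      hKc.isClosed hyK
    refine ⟨w - c • l, fun s hs => ?_, ?_⟩
    · have := h2 _ (hSK s hs)
      have h2 := hl s hs
      simp only [map_smul, smul_eq_mul] at this
      rw [lt_inv_mul_iff₀ h2] at this
      simp
      linarith
    · simp only [map_smul, smul_eq_mul] at h1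
      rw [inv_mul_lt_iff₀ h] at h1
      simp
      linarith

theorem gauss_integrable_monomial {n : ℕ} (α : Fin n →₀ ℕ) :
    Integrable (fun x : Fin n → ℝ => ∏ i, x i ^ α i) (gaussianMeasure n) := by
  unfold gaussianMeasure
  rw [integrable_withDensity_iff_integrable_smul' (by fun_prop) (by simp)]
  have h1 : Integrable (fun x : Fin n → ℝ => ∏ i, ((x i) ^ (α i : ℝ) * Real.exp (-(1/2) * x i ^ 2))) := by
    apply Integrable.fintype_prod (f := fun i (t : ℝ) => t ^ (α i : ℝ) * Real.exp (-(1/2) * t ^ 2))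
    intro i
    exact integrable_rpow_mul_exp_neg_mul_sq (by norm_num) (by have : (0:ℝ) ≤ α i := by positivity
                                                               linarith)
  refine (h1.const_mul ((2 * Real.pi) ^ (-(n : ℝ) / 2))).congr (Eventually.of_forall fun x => ?_)
  simp only [Real.rpow_natCast, Finset.prod_mul_distrib, ← Real.exp_sum, ← Finset.mul_sum]
  rw [ENNReal.toReal_ofReal (by positivity), smul_eq_mul]
  rw [show -(1/2) * ∑ i, x i ^ 2 = -(∑ i, x i ^ 2) / 2 by ring]
  ring

theorem eval_eq_sum_prod {n : ℕ} (p : MvPolynomial (Fin n) ℝ) (x : Fin n → ℝ) :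
    eval x p = ∑ α ∈ p.support, p.coeff α * ∏ i, x i ^ α i := by
  rw [MvPolynomial.eval_eq']

theorem gauss_integrable {n : ℕ} (p : MvPolynomial (Fin n) ℝ) :
    Integrable (fun x => eval x p) (gaussianMeasure n) := by
  simp_rw [eval_eq_sum_prod]
  exact integrable_finsetSum _ fun α _ => (gauss_integrable_monomial α).const_mul _

theorem riesz_gmom {n : ℕ} (p : MvPolynomial (Fin n) ℝ) :
    riesz (gmom n) p = ∫ x, eval x p ∂gaussianMeasure n := by
  simp_rw [eval_eq_sum_prod]
  rw [integral_finsetSum _ fun α _ => (gauss_integrable_monomial α).const_mul _]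
  simp_rw [integral_const_mul]
  rfl

/-- moments of the Gaussian measure on a set -/
noncomputable def gmomOn (n : ℕ) (U : Set (Fin n → ℝ)) (α : Fin n →₀ ℕ) : ℝ :=
  ∫ x in U, (∏ i, x i ^ α i) ∂gaussianMeasure n

theorem riesz_gmomOn {n : ℕ} (U : Set (Fin n → ℝ)) (p : MvPolynomial (Fin n) ℝ) :
    riesz (gmomOn n U) p = ∫ x in U, eval x p ∂gaussianMeasure n := by
  simp_rw [eval_eq_sum_prod]
  rw [integral_finsetSum _ fun α _ => ((gauss_integrable_monomial α).const_mul _).integrableOn]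
  simp_rw [integral_const_mul]
  rfl

instance gauss_openPos (n : ℕ) : (gaussianMeasure n).IsOpenPosMeasure := by
  have : (volume : Measure (Fin n → ℝ)) ≪ gaussianMeasure n := by
    apply withDensity_absolutelyContinuous'
    · apply Measurable.aemeasurable
      fun_prop
    · refine Eventually.of_forall fun x => ?_
      have : 0 < (2 * Real.pi) ^ (-(n : ℝ) / 2) * Real.exp (-(∑ i, x i ^ 2) / 2) := by positivity
      simpa using this
  exact this.isOpenPosMeasure

theorem poly_zero_of_open {n : ℕ} (p : MvPolynomial (Fin n) ℝ) (U : Set (Fin n → ℝ))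
    (hU : IsOpen U) (hne : U.Nonempty) (h : ∀ x ∈ U, eval x p = 0) : p = 0 := by
  obtain ⟨x, hx⟩ := hne
  obtain ⟨ε, hε, hb⟩ := Metric.isOpen_iff.1 hU x hx
  apply funext_set (fun i => Metric.ball (x i) ε)
  · intro i
    rw [Real.ball_eq_Ioo]
    exact Set.Ioo_infinite (by linarith)
  · intro z hz
    rw [map_zero]
    apply h
    apply hb
    rwa [← ball_pi _ hε] at hz

theorem gauss_pos {n : ℕ} (p : MvPolynomial (Fin n) ℝ) (hp : p ≠ 0) (U : Set (Fin n → ℝ))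
    (hU : IsOpen U) (hne : U.Nonempty) (h : ∀ x ∈ U, 0 ≤ eval x p) :
    0 < ∫ x in U, eval x p ∂gaussianMeasure n := by
  have h0 : 0 ≤ ∫ x in U, eval x p ∂gaussianMeasure n :=
    setIntegral_nonneg hU.measurableSet h
  refine lt_of_le_of_ne h0 fun h1 => hp ?_
  apply poly_zero_of_open p U hU hne
  rw [eq_comm, setIntegral_eq_zero_iff_of_nonneg_ae
    (ae_restrict_of_forall_mem hU.measurableSet h) (gauss_integrable p).integrableOn] at h1
  have := Measure.eqOn_open_of_ae_eq h1 hU p.continuous_eval.continuousOn continuousOn_const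
  exact this

theorem riesz_eq_sum {n : ℕ} (u : (Fin n →₀ ℕ) → ℝ) (p : MvPolynomial (Fin n) ℝ)
    (T : Finset (Fin n →₀ ℕ)) (hT : p.support ⊆ T) :
    riesz u p = ∑ α ∈ T, p.coeff α * u α := by
  unfold riesz
  apply Finset.sum_subset hT
  intro α _ h
  rw [MvPolynomial.notMem_support_iff.1 h, zero_mul]

/-- the Riesz functional as a linear map -/
noncomputable def rieszL {n : ℕ} (u : (Fin n →₀ ℕ) → ℝ) : MvPolynomial (Fin n) ℝ →ₗ[ℝ] ℝ where
  toFun := riesz u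
  map_add' p q := by
    classical
    rw [riesz_eq_sum u (p + q) (p.support ∪ q.support) MvPolynomial.support_add,
      riesz_eq_sum u p (p.support ∪ q.support) Finset.subset_union_left,
      riesz_eq_sum u q (p.support ∪ q.support) Finset.subset_union_right,
      ← Finset.sum_add_distrib]
    simp [add_mul]
  map_smul' c p := by
    rw [riesz_eq_sum u (c • p) p.support MvPolynomial.support_smul, riesz, RingHom.id_apply,
      smul_eq_mul, Finset.mul_sum]
    simp [mul_assoc]

theorem rieszL_apply {n : ℕ} (u : (Fin n →₀ ℕ) → ℝ) (p : MvPolynomial (Fin n) ℝ) :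
    rieszL u p = riesz u p := rfl

theorem riesz_monomial {n : ℕ} (u : (Fin n →₀ ℕ) → ℝ) (α : Fin n →₀ ℕ) :
    riesz u (monomial α 1) = u α := by
  classical
  rw [riesz_eq_sum u _ {α} MvPolynomial.support_monomial_subset]
  simp

theorem riesz_congr {n N : ℕ} (u v : (Fin n →₀ ℕ) → ℝ) (p : MvPolynomial (Fin n) ℝ)
    (hp : p.totalDegree ≤ N) (h : ∀ α, fdeg α ≤ N → u α = v α) : riesz u p = riesz v p := by
  apply Finset.sum_congr rfl
  intro α hα
  rw [h α ((le_totalDegree hα).trans hp)]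

theorem riesz_add_seq {n : ℕ} (u v : (Fin n →₀ ℕ) → ℝ) (p : MvPolynomial (Fin n) ℝ) :
    riesz (fun α => u α + v α) p = riesz u p + riesz v p := by
  simp [riesz, mul_add, Finset.sum_add_distrib]

theorem riesz_sub_seq {n : ℕ} (u v : (Fin n →₀ ℕ) → ℝ) (p : MvPolynomial (Fin n) ℝ) :
    riesz (fun α => u α - v α) p = riesz u p - riesz v p := by
  simp [riesz, mul_sub, Finset.sum_sub_distrib]

theorem continuous_riesz {n : ℕ} (p : MvPolynomial (Fin n) ℝ) :
    Continuous fun u : (Fin n →₀ ℕ) → ℝ => riesz u p := by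
  unfold riesz
  fun_prop

/-- multi-indices of bounded degree -/
abbrev Idx (n N : ℕ) := {α : Fin n →₀ ℕ // fdeg α ≤ N}

theorem fdeg_eq {n : ℕ} (α : Fin n →₀ ℕ) : fdeg α = α.degree := rfl

noncomputable instance (n N : ℕ) : Fintype (Idx n N) :=
  (Finsupp.finite_of_degree_le (σ := Fin n) N).fintype

/-- coefficient vector -/
noncomputable def cf (n N : ℕ) : MvPolynomial (Fin n) ℝ →ₗ[ℝ] (Idx n N → ℝ) :=
  LinearMap.pi fun α => lcoeff ℝ α.1

theorem cf_apply {n N : ℕ} (p : MvPolynomial (Fin n) ℝ) (α : Idx n N) :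
    cf n N p α = p.coeff α.1 := rfl

/-- polynomial from coefficient vector -/
noncomputable def pol (n N : ℕ) (x : Idx n N → ℝ) : MvPolynomial (Fin n) ℝ :=
  ∑ i, x i • monomial i.1 (1:ℝ)

theorem pol_cf {n N : ℕ} (p : MvPolynomial (Fin n) ℝ) (hp : p.totalDegree ≤ N) :
    pol n N (cf n N p) = p := by
  classical
  have h1 : pol n N (cf n N p) = ∑ i : Idx n N, monomial i.1 (p.coeff i.1) := by
    simp [pol, cf_apply, smul_monomial]
  rw [h1]
  conv_rhs => rw [p.as_sum]
  symm
  apply Finset.sum_bij_ne_zero (fun α hα _ => (⟨α, (le_totalDegree hα).trans hp⟩ : Idx n N))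
  · simp
  · intro a _ _ b _ _ h
    exact congrArg Subtype.val h
  · intro b _ hb
    refine ⟨b.1, ?_, hb, rfl⟩
    rw [mem_support_iff]
    intro h
    rw [h] at hb
    simp at hb
  · intros
    rfl

theorem cf_pol {n N : ℕ} (x : Idx n N → ℝ) : cf n N (pol n N x) = x := by
  classical
  ext α
  rw [cf_apply, pol, coeff_sum]
  simp only [coeff_smul, coeff_monomial, smul_eq_mul, mul_ite, mul_one, mul_zero]
  rw [Finset.sum_eq_single α]
  · simp
  · intro b _ hb
    rw [if_neg]
    exact fun h => hb (Subtype.ext h)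
  · simp

theorem pol_deg {n N : ℕ} (x : Idx n N → ℝ) : (pol n N x).totalDegree ≤ N := by
  unfold pol
  apply totalDegree_finsetSum_le
  intro i _
  refine (totalDegree_smul_le _ _).trans ((totalDegree_monomial_le _ _).trans i.2)

theorem pol_smul {n N : ℕ} (c : ℝ) (x : Idx n N → ℝ) : pol n N (c • x) = c • pol n N x := by
  simp [pol, Finset.smul_sum, smul_smul]

theorem pol_ne {n N : ℕ} (x : Idx n N → ℝ) (hx : x ≠ 0) : pol n N x ≠ 0 := by
  intro h
  apply hx
  rw [← cf_pol x, h, map_zero]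

theorem compact_sq {n N : ℕ} {E : Type*} [NormedAddCommGroup E] [NormedSpace ℝ E]
    (A : MvPolynomial (Fin n) ℝ →ₗ[ℝ] E) (h : MvPolynomial (Fin n) ℝ) :
    IsCompact ((fun x => A (h * pol n N x ^ 2)) '' Metric.sphere (0 : Idx n N → ℝ) 1) := by
  apply (isCompact_sphere _ _).image
  have : (fun x => A (h * pol n N x ^ 2)) =
      fun x => ∑ i, ∑ j, (x i * x j) • A (h * (monomial i.1 (1:ℝ) * monomial j.1 (1:ℝ))) := by
    ext x
    rw [pow_two, pol, Finset.sum_mul_sum, Finset.mul_sum, map_sum]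
    apply Finset.sum_congr rfl
    intro i _
    rw [Finset.mul_sum, map_sum]
    apply Finset.sum_congr rfl
    intro j _
    rw [smul_mul_smul_comm, mul_smul_comm, LinearMap.map_smul]
  rw [this]
  fun_prop

theorem nonneg_sq {n N : ℕ} (A : MvPolynomial (Fin n) ℝ →ₗ[ℝ] ℝ) (h : MvPolynomial (Fin n) ℝ)
    (H : ∀ x ∈ Metric.sphere (0 : Idx n N → ℝ) 1, 0 ≤ A (h * pol n N x ^ 2))
    (p : MvPolynomial (Fin n) ℝ) (hp : p.totalDegree ≤ N) : 0 ≤ A (h * p ^ 2) := by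
  by_cases h0 : cf n N p = 0
  · have : p = 0 := by
      rw [← pol_cf p hp, h0]
      simp [pol]
    simp [this]
  · have hn : 0 < ‖cf n N p‖ := norm_pos_iff.2 h0
    have h1 := H (‖cf n N p‖⁻¹ • cf n N p) (by
      rw [mem_sphere_zero_iff_norm, norm_smul, norm_inv, norm_norm, inv_mul_cancel₀ hn.ne'])
    rw [pol_smul, pol_cf p hp, smul_pow, mul_smul_comm, map_smul, smul_eq_mul] at h1
    exact nonneg_of_mul_nonneg_right h1 (by positivity)

/-- sequence from a functional on coefficient vectors -/
noncomputable def seqOf {n N : ℕ} (φ : (Idx n N → ℝ) →ₗ[ℝ] ℝ) (α : Fin n →₀ ℕ) : ℝ :=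
  if fdeg α ≤ N then φ (cf n N (monomial α 1)) else 0

theorem riesz_seqOf {n N : ℕ} (φ : (Idx n N → ℝ) →ₗ[ℝ] ℝ) (p : MvPolynomial (Fin n) ℝ)
    (hp : p.totalDegree ≤ N) : riesz (seqOf φ) p = φ (cf n N p) := by
  conv_rhs => rw [p.as_sum, map_sum, map_sum]
  apply Finset.sum_congr rfl
  intro α hα
  have hα' : fdeg α ≤ N := (le_totalDegree hα).trans hp
  rw [seqOf, if_pos hα', ← smul_eq_mul, ← map_smul, ← map_smul,
    smul_monomial, smul_eq_mul, mul_one]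

theorem split_monomial {n d : ℕ} (α : Fin n →₀ ℕ) (h : fdeg α ≤ 2 * d) :
    ∃ p q : MvPolynomial (Fin n) ℝ, p.totalDegree ≤ d ∧ q.totalDegree ≤ d ∧
      monomial α 1 = p ^ 2 - q ^ 2 := by
  obtain ⟨β, γ, hβ, hγ, rfl⟩ : ∃ β γ : Fin n →₀ ℕ, fdeg β ≤ d ∧ fdeg γ ≤ d ∧ α = β + γ := by
    by_cases h1 : fdeg α ≤ d
    · exact ⟨α, 0, h1, by simp [fdeg], by simp⟩
    · obtain ⟨β, hβ, hβ2⟩ := Finsupp.exists_le_degree_eq α d (by rw [← fdeg_eq]; omega)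
      have h2 : α = β + (α - β) := (add_tsub_cancel_of_le hβ).symm
      refine ⟨β, α - β, hβ2.le, ?_, h2⟩
      have h3 := congrArg Finsupp.degree h2
      rw [map_add, hβ2] at h3
      rw [fdeg_eq] at h ⊢
      omega
  have hb : ∀ δ : Fin n →₀ ℕ, fdeg δ ≤ d → (monomial δ (1/2 : ℝ)).totalDegree ≤ d :=
    fun δ hδ => (totalDegree_monomial_le _ _).trans hδ
  refine ⟨monomial β (1/2) + monomial γ (1/2), monomial β (1/2) - monomial γ (1/2),
    (totalDegree_add _ _).trans (max_le (hb _ hβ) (hb _ hγ)),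
    (totalDegree_sub _ _).trans (max_le (hb _ hβ) (hb _ hγ)), ?_⟩
  have : (monomial (β + γ) (1:ℝ)) = 4 * (monomial β (1/2) * monomial γ (1/2)) := by
    rw [monomial_mul, show (4 : MvPolynomial (Fin n) ℝ) = C 4 from (map_ofNat C 4).symm, C_mul_monomial]
    norm_num
  rw [this]
  ring

theorem IsSOS.add {n d : ℕ} {p q : MvPolynomial (Fin n) ℝ} (hp : IsSOS d p) (hq : IsSOS d q) :
    IsSOS d (p + q) := by
  obtain ⟨k, a, ha, rfl⟩ := hp
  obtain ⟨l, b, hb, rfl⟩ := hq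
  refine ⟨k + l, Fin.append a b, ?_, ?_⟩
  · intro i
    refine Fin.addCases (fun i => ?_) (fun i => ?_) i
    · simpa using ha i
    · simpa using hb i
  · simp [Fin.sum_univ_add]

theorem IsSOS.smul {n d : ℕ} {p : MvPolynomial (Fin n) ℝ} (hp : IsSOS d p) (c : ℝ) (hc : 0 ≤ c) :
    IsSOS d (c • p) := by
  obtain ⟨k, a, ha, rfl⟩ := hp
  refine ⟨k, fun i => Real.sqrt c • a i, fun i => (totalDegree_smul_le _ _).trans (ha i), ?_⟩
  simp [smul_pow, Real.sq_sqrt hc, Finset.smul_sum]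

theorem IsSOS.zero {n d : ℕ} : IsSOS d (0 : MvPolynomial (Fin n) ℝ) :=
  ⟨0, fun _ => 0, by simp, by simp⟩

theorem IsSOS.sq {n d : ℕ} {p : MvPolynomial (Fin n) ℝ} (hp : p.totalDegree ≤ d) :
    IsSOS d (p ^ 2) :=
  ⟨1, fun _ => p, by simpa using hp, by simp⟩

theorem IsSOS.deg {n d : ℕ} {p : MvPolynomial (Fin n) ℝ} (hp : IsSOS d p) :
    p.totalDegree ≤ 2 * d := by
  obtain ⟨k, a, ha, rfl⟩ := hp
  apply totalDegree_finsetSum_le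
  intro i _
  exact (totalDegree_pow _ _).trans (Nat.mul_le_mul_left _ (ha i))

theorem InQM.add {n m d : ℕ} {g : Fin m → MvPolynomial (Fin n) ℝ} {p q : MvPolynomial (Fin n) ℝ}
    (hp : InQM g d p) (hq : InQM g d q) : InQM g d (p + q) := by
  obtain ⟨a, b, ha, hb, rfl⟩ := hp
  obtain ⟨a', b', ha', hb', rfl⟩ := hq
  refine ⟨a + a', fun j => b j + b' j, ha.add ha', fun j => (hb j).add (hb' j), ?_⟩
  simp only [add_mul, Finset.sum_add_distrib]
  ring

theorem InQM.smul {n m d : ℕ} {g : Fin m → MvPolynomial (Fin n) ℝ} {p : MvPolynomial (Fin n) ℝ}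
    (hp : InQM g d p) (c : ℝ) (hc : 0 ≤ c) : InQM g d (c • p) := by
  obtain ⟨a, b, ha, hb, rfl⟩ := hp
  refine ⟨c • a, fun j => c • b j, ha.smul c hc, fun j => (hb j).smul c hc, ?_⟩
  simp [smul_add, Finset.smul_sum]

theorem InQM.of_sos {n m d : ℕ} {g : Fin m → MvPolynomial (Fin n) ℝ} {p : MvPolynomial (Fin n) ℝ}
    (hp : IsSOS d p) : InQM g d p :=
  ⟨p, fun _ => 0, hp, fun _ => IsSOS.zero, by simp⟩

theorem InQM.of_mul {n m d : ℕ} {g : Fin m → MvPolynomial (Fin n) ℝ} {p : MvPolynomial (Fin n) ℝ}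
    (j : Fin m) (hp : IsSOS (d - dHalf (g j)) p) : InQM g d (g j * p) := by
  classical
  refine ⟨0, fun i => if i = j then p else 0, IsSOS.zero, fun i => ?_, ?_⟩
  · dsimp only
    split_ifs with h
    · subst h
      exact hp
    · exact IsSOS.zero
  · simp [mul_comm]

theorem loc_deg {n d k : ℕ} {g p : MvPolynomial (Fin n) ℝ} (hg : dHalf g ≤ d)
    (hp : p.totalDegree ≤ 2 * (d - dHalf g)) (hk : k = 2 * d) : (g * p).totalDegree ≤ k := by
  have := totalDegree_mul g p
  unfold dHalf at *
  omega

theorem InQM.deg {n m d : ℕ} {g : Fin m → MvPolynomial (Fin n) ℝ} {p : MvPolynomial (Fin n) ℝ}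
    (hd : ∀ j, dHalf (g j) ≤ d) (hp : InQM g d p) : p.totalDegree ≤ 2 * d := by
  obtain ⟨a, b, ha, hb, rfl⟩ := hp
  refine (totalDegree_add _ _).trans (max_le ha.deg ?_)
  apply totalDegree_finsetSum_le
  intro j _
  rw [mul_comm]
  exact loc_deg (hd j) (hb j).deg rfl

theorem riesz_sos_nonneg {n d : ℕ} {u : (Fin n →₀ ℕ) → ℝ} (hu : MomPSD d u)
    {p : MvPolynomial (Fin n) ℝ} (hp : IsSOS d p) : 0 ≤ riesz u p := by
  obtain ⟨k, a, ha, rfl⟩ := hp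
  rw [← rieszL_apply, map_sum]
  exact Finset.sum_nonneg fun i _ => hu _ (ha i)

theorem riesz_qm_nonneg {n m d : ℕ} {g : Fin m → MvPolynomial (Fin n) ℝ}
    {u : (Fin n →₀ ℕ) → ℝ} (hu : MomPSD d u) (hl : ∀ j, LocPSD (d - dHalf (g j)) (g j) u)
    {p : MvPolynomial (Fin n) ℝ} (hp : InQM g d p) : 0 ≤ riesz u p := by
  obtain ⟨a, b, ha, hb, rfl⟩ := hp
  rw [← rieszL_apply, map_add, map_sum]
  refine add_nonneg (riesz_sos_nonneg hu ha) (Finset.sum_nonneg fun j _ => ?_)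
  obtain ⟨k, q, hq, h⟩ := hb j
  rw [h, mul_comm, Finset.mul_sum, map_sum]
  exact Finset.sum_nonneg fun i _ => hl j _ (hq i)

theorem weak_duality {n m d : ℕ} {g : Fin m → MvPolynomial (Fin n) ℝ}
    {u v : (Fin n →₀ ℕ) → ℝ} (h : Feasible g d u v) {f p : MvPolynomial (Fin n) ℝ}
    (hp : IsSOS d p) (hq : InQM g d (p - f)) : riesz u f ≤ ∫ x, eval x p ∂gaussianMeasure n := by
  obtain ⟨h1, h2, h3, h4⟩ := h
  rw [← riesz_gmom, ← riesz_congr _ _ p hp.deg h1, riesz_add_seq]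
  have a := riesz_qm_nonneg h2 h4 hq
  rw [← rieszL_apply, map_sub, rieszL_apply, rieszL_apply] at a
  have b := riesz_sos_nonneg h3 hp
  linarith

theorem gmom_psd (n d : ℕ) : MomPSD d (gmom n) := by
  intro p _
  rw [riesz_gmom]
  apply integral_nonneg
  intro x
  simp only [map_pow, Pi.zero_apply]
  positivity

theorem primal_max {n m : ℕ} (g : Fin m → MvPolynomial (Fin n) ℝ)
    (f : MvPolynomial (Fin n) ℝ) (d : ℕ) :
    ∃ u v, Feasible g d u v ∧ ∀ u' v', Feasible g d u' v' → (∀ α, ¬ fdeg α ≤ 2 * d → u' α = 0) →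
      riesz u' f ≤ riesz u f := by
  classical
  have hb : ∀ α : Fin n →₀ ℕ, ∃ b : ℝ, 0 ≤ b ∧ ∀ u v, Feasible g d u v →
      (∀ α, ¬ fdeg α ≤ 2 * d → u α = 0) → u α ∈ Set.Icc (-b) b := by
    intro α
    by_cases h : fdeg α ≤ 2 * d
    · obtain ⟨p, q, hp, hq, hpq⟩ := split_monomial α h
      have hP := gmom_psd n d p hp
      have hQ := gmom_psd n d q hq
      refine ⟨riesz (gmom n) (p ^ 2) + riesz (gmom n) (q ^ 2), by linarith, ?_⟩
      intro u v ⟨h1, h2, h3, h4⟩ _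
      rw [← riesz_monomial u α, hpq, ← rieszL_apply u, map_sub, rieszL_apply, rieszL_apply]
      rw [← riesz_congr _ _ (p ^ 2) (IsSOS.sq hp).deg h1, riesz_add_seq,
        ← riesz_congr _ _ (q ^ 2) (IsSOS.sq hq).deg h1, riesz_add_seq]
      have := h2 p hp
      have := h2 q hq
      have := h3 p hp
      have := h3 q hq
      constructor <;> linarith
    · refine ⟨0, le_rfl, fun u v _ hu => ?_⟩
      simp [hu α h]
  choose b hb0 hb using hb
  set K : Set ((Fin n →₀ ℕ) → ℝ) := (Set.pi Set.univ fun α => Set.Icc (-b α) (b α)) ∩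
    {u | Feasible g d u (fun α => gmom n α - u α)} with hK
  have hKc : IsCompact K := by
    apply (isCompact_univ_pi fun α => isCompact_Icc).inter_right
    have : {u | Feasible g d u (fun α => gmom n α - u α)} =
        {u | (∀ p : MvPolynomial (Fin n) ℝ, p.totalDegree ≤ d → 0 ≤ riesz u (p ^ 2)) ∧
          (∀ p : MvPolynomial (Fin n) ℝ, p.totalDegree ≤ d →
            0 ≤ riesz (gmom n) (p ^ 2) - riesz u (p ^ 2)) ∧
          ∀ j, ∀ p : MvPolynomial (Fin n) ℝ, p.totalDegree ≤ d - dHalf (g j) →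
            0 ≤ riesz u (g j * p ^ 2)} := by
      ext u
      simp [Feasible, MomPSD, LocPSD, riesz_sub_seq]
    rw [this]
    simp only [Set.ofPred_and, Set.ofPred_forall]
    refine IsClosed.inter ?_ (IsClosed.inter ?_ ?_)
    · exact isClosed_iInter fun p => isClosed_iInter fun _ =>
        isClosed_le continuous_const (continuous_riesz _)
    · exact isClosed_iInter fun p => isClosed_iInter fun _ =>
        isClosed_le continuous_const (continuous_const.sub (continuous_riesz _))
    · exact isClosed_iInter fun j => isClosed_iInter fun p => isClosed_iInter fun _ =>
        isClosed_le continuous_const (continuous_riesz _)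
  have hKne : K.Nonempty := by
    refine ⟨fun _ => 0, fun α _ => by simp [hb0 α], ?_⟩
    refine ⟨by simp, fun p _ => by simp [riesz], ?_, fun j p _ => by simp [riesz]⟩
    simpa using gmom_psd n d
  obtain ⟨u, hu, hmax⟩ := hKc.exists_isMaxOn hKne (continuous_riesz f).continuousOn
  refine ⟨u, _, hu.2, fun u' v' h' h0 => ?_⟩
  apply hmax
  refine ⟨fun α _ => hb α u' v' h' h0, ?_⟩
  obtain ⟨h1, h2, h3, h4⟩ := h'
  refine ⟨by simp, h2, fun p hp => ?_, h4⟩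
  rw [riesz_congr (N := 2 * d) _ v' _ (IsSOS.sq hp).deg]
  · exact h3 p hp
  · intro α hα
    rw [← h1 α hα]
    ring

/-- ambient space for the conic duality argument -/
abbrev EE (n d : ℕ) := (Idx n (2 * d) → ℝ) × ℝ

theorem dual_exists {n m : ℕ} (g : Fin m → MvPolynomial (Fin n) ℝ)
    (hΩ : (interior (semialg g)).Nonempty) (f : MvPolynomial (Fin n) ℝ)
    (d : ℕ) (hd : ∀ j, dHalf (g j) ≤ d) (hfd : f.totalDegree ≤ 2 * d) (r : ℝ)
    (hr : ∀ u v, Feasible g d u v → (∀ α, ¬ fdeg α ≤ 2 * d → u α = 0) → riesz u f ≤ r) :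
    ∃ p, IsSOS d p ∧ InQM g d (p - f) ∧ ∫ x, eval x p ∂gaussianMeasure n ≤ r := by
  classical
  set Cn : Set (EE n d) := {e | ∃ p q t, IsSOS d p ∧ InQM g d q ∧ 0 ≤ t ∧
    e = (cf n (2 * d) (p - q), riesz (gmom n) p + t)} with hCn
  by_cases hmem : ((cf n (2 * d) f, r) : EE n d) ∈ Cn
  · obtain ⟨p, q, t, hp, hq, ht, he⟩ := hmem
    rw [Prod.mk.injEq] at he
    have hpq : f = p - q := by
      rw [← pol_cf f hfd, he.1, pol_cf]
      exact (totalDegree_sub _ _).trans (max_le hp.deg (hq.deg hd))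
    refine ⟨p, hp, ?_, ?_⟩
    · rw [hpq, sub_sub_cancel]
      exact hq
    · rw [← riesz_gmom, he.2]
      linarith
  exfalso
  -- the generators
  set A1 : MvPolynomial (Fin n) ℝ →ₗ[ℝ] EE n d := (cf n (2 * d)).prod (rieszL (gmom n))
  set A2 : MvPolynomial (Fin n) ℝ →ₗ[ℝ] EE n d := (-cf n (2 * d)).prod 0
  set S1 : Set (EE n d) := (fun x => A1 (1 * pol n d x ^ 2)) '' Metric.sphere (0 : Idx n d → ℝ) 1
    with hS1
  set S2 : Set (EE n d) := (fun x => A2 (1 * pol n d x ^ 2)) '' Metric.sphere (0 : Idx n d → ℝ) 1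
    with hS2
  set S3 : Set (EE n d) := ⋃ j : {j : Fin m // g j ≠ 0}, (fun x => A2 (g j * pol n (d - dHalf (g j)) x ^ 2))
    '' Metric.sphere (0 : Idx n (d - dHalf (g j)) → ℝ) 1 with hS3
  set S4 : Set (EE n d) := {(0, 1)} with hS4
  have hSc : IsCompact (S1 ∪ S2 ∪ S3 ∪ S4) :=
    (((compact_sq _ _).union (compact_sq _ _)).union
      (isCompact_iUnion fun j => compact_sq _ _)).union isCompact_singleton
  set U := interior (semialg g) with hU
  set u0 := gmomOn n U with hu0
  -- the strictly positive functional
  set lc : (Idx n (2 * d) → ℝ) →ₗ[ℝ] ℝ := rieszL u0 ∘ₗ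
    ∑ i, (LinearMap.toSpanSingleton ℝ _ (monomial i.1 (1:ℝ))) ∘ₗ LinearMap.proj i with hlc
  have hlcp : ∀ p : MvPolynomial (Fin n) ℝ, p.totalDegree ≤ 2 * d →
      lc (cf n (2 * d) p) = riesz u0 p := by
    intro p hp
    conv_rhs => rw [← pol_cf p hp]
    rw [← rieszL_apply]
    simp [hlc, pol]
  set l : EE n d →ₗ[ℝ] ℝ := (-lc).coprod ((2:ℝ) • LinearMap.id) with hl
  have hlv : ∀ (a : Idx n (2 * d) → ℝ) (s : ℝ), l (a, s) = - lc a + 2 * s := by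
    intro a s
    simp [hl]
  have hx0 : ∀ {N : ℕ} {x : Idx n N → ℝ}, x ∈ Metric.sphere (0 : Idx n N → ℝ) 1 → x ≠ 0 := by
    intro N x hx h
    rw [h] at hx
    simp at hx
  have hle : ∀ p : MvPolynomial (Fin n) ℝ, riesz u0 (p ^ 2) ≤ riesz (gmom n) (p ^ 2) := by
    intro p
    rw [hu0, riesz_gmomOn, riesz_gmom]
    apply setIntegral_le_integral (gauss_integrable _)
    refine Eventually.of_forall fun x => ?_
    simp only [map_pow, Pi.zero_apply]
    positivity
  have hsqpos : ∀ p : MvPolynomial (Fin n) ℝ, p ≠ 0 → 0 < riesz u0 (p ^ 2) := by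
    intro p hp
    rw [hu0, riesz_gmomOn]
    apply gauss_pos _ (pow_ne_zero _ hp) U isOpen_interior hΩ
    intro x _
    simp only [map_pow]
    positivity
  have hlpos : ∀ s ∈ S1 ∪ S2 ∪ S3 ∪ S4, 0 < l.toContinuousLinearMap s := by
    rintro s (((⟨x, hx, rfl⟩ | ⟨x, hx, rfl⟩) | hs) | hs)
    · have h1 := hle (pol n d x)
      have h2 := hsqpos _ (pol_ne x (hx0 hx))
      have h3 := hlcp _ (IsSOS.sq (pol_deg x)).deg
      change 0 < l (cf n (2 * d) (1 * pol n d x ^ 2), riesz (gmom n) (1 * pol n d x ^ 2))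
      rw [hlv, one_mul, h3]
      linarith
    · have h2 := hsqpos _ (pol_ne x (hx0 hx))
      have h3 := hlcp _ (IsSOS.sq (pol_deg x)).deg
      change 0 < l (-cf n (2 * d) (1 * pol n d x ^ 2), 0)
      rw [hlv, one_mul, map_neg, h3]
      linarith
    · simp only [hS3, Set.mem_iUnion] at hs
      obtain ⟨⟨j, hj⟩, x, hx, rfl⟩ := hs
      have h3 := hlcp (g j * pol n (d - dHalf (g j)) x ^ 2)
        (loc_deg (hd j) (IsSOS.sq (pol_deg x)).deg rfl)
      have h2 : 0 < riesz u0 (g j * pol n (d - dHalf (g j)) x ^ 2) := by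
        rw [hu0, riesz_gmomOn]
        apply gauss_pos _ (mul_ne_zero hj (pow_ne_zero _ (pol_ne x (hx0 hx)))) U isOpen_interior hΩ
        intro z hz
        have := interior_subset hz j
        simp only [map_pow, map_mul]
        positivity
      change 0 < l (-cf n (2 * d) (g j * pol n (d - dHalf (g j)) x ^ 2), 0)
      rw [hlv, map_neg, h3]
      linarith
    · rw [Set.mem_singleton_iff.1 hs]
      change 0 < l (0, 1)
      rw [hlv]
      simp
  have hqm0 : InQM g d 0 := InQM.of_sos IsSOS.zero
  have hSC : S1 ∪ S2 ∪ S3 ∪ S4 ⊆ Cn := by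
    rintro s (((⟨x, hx, rfl⟩ | ⟨x, hx, rfl⟩) | hs) | hs)
    · exact ⟨pol n d x ^ 2, 0, 0, IsSOS.sq (pol_deg x), hqm0, le_rfl, by
        simp [A1, rieszL_apply]⟩
    · exact ⟨0, pol n d x ^ 2, 0, IsSOS.zero, InQM.of_sos (IsSOS.sq (pol_deg x)), le_rfl, by
        simp [A2, riesz]⟩
    · simp only [hS3, Set.mem_iUnion] at hs
      obtain ⟨⟨j, hj⟩, x, hx, rfl⟩ := hs
      exact ⟨0, _, 0, IsSOS.zero, InQM.of_mul j (IsSOS.sq (pol_deg x)), le_rfl, by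
        simp [A2, riesz]⟩
    · rw [Set.mem_singleton_iff.1 hs]
      exact ⟨0, 0, 1, IsSOS.zero, hqm0, zero_le_one, by simp [riesz]⟩
  have h0C : (0 : EE n d) ∈ Cn := ⟨0, 0, 0, IsSOS.zero, hqm0, le_rfl, by simp [riesz]; rfl⟩
  have hsmC : ∀ c : ℝ, 0 ≤ c → ∀ x ∈ Cn, c • x ∈ Cn := by
    rintro c hc _ ⟨p, q, t, hp, hq, ht, rfl⟩
    refine ⟨c • p, c • q, c * t, hp.smul c hc, hq.smul c hc, by positivity, ?_⟩
    rw [Prod.smul_mk, ← smul_sub, map_smul, ← rieszL_apply, ← rieszL_apply, map_smul, smul_eq_mul,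
      smul_eq_mul, mul_add]
  have haddC : ∀ x ∈ Cn, ∀ y ∈ Cn, x + y ∈ Cn := by
    rintro _ ⟨p, q, t, hp, hq, ht, rfl⟩ _ ⟨p', q', t', hp', hq', ht', rfl⟩
    refine ⟨p + p', q + q', t + t', hp.add hp', hq.add hq', by positivity, ?_⟩
    have e1 : cf n (2 * d) (p + p' - (q + q')) =
        cf n (2 * d) (p - q) + cf n (2 * d) (p' - q') := by
      rw [← LinearMap.map_add]
      congr 1
      ring
    have e2 : riesz (gmom n) (p + p') = riesz (gmom n) p + riesz (gmom n) p' :=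
      (rieszL (gmom n)).map_add p p'
    rw [Prod.mk_add_mk, e1, e2]
    congr 1
    ring
  have hconv : Convex ℝ Cn := fun x hx y hy a b ha hb _ =>
    haddC _ (hsmC a ha x hx) _ (hsmC b hb y hy)
  obtain ⟨w, hw, hwf⟩ := cone_alt hSc _ hlpos hSC hconv h0C hsmC _ hmem
  set φ : (Idx n (2 * d) → ℝ) →ₗ[ℝ] ℝ := w.toLinearMap ∘ₗ LinearMap.inl ℝ _ _ with hφd
  set lam : ℝ := w (0, 1) with hlam
  have hwe : ∀ (a : Idx n (2 * d) → ℝ) (s : ℝ), w (a, s) = φ a + s * lam := by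
    intro a s
    have : ((a, s) : EE n d) = (a, 0) + s • ((0, 1) : EE n d) := by simp
    rw [this, map_add, map_smul]
    rfl
  rw [hwe] at hwf
  have c4 : 0 ≤ lam := hw _ (Or.inr rfl)
  have c1 : ∀ p : MvPolynomial (Fin n) ℝ, p.totalDegree ≤ d →
      0 ≤ φ (cf n (2 * d) (p ^ 2)) + riesz (gmom n) (p ^ 2) * lam := by
    intro p hp
    have := nonneg_sq (N := d) (w.toLinearMap ∘ₗ A1) 1
      (fun x hx => hw _ (Or.inl (Or.inl (Or.inl ⟨x, hx, rfl⟩)))) p hp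
    rw [one_mul] at this
    rw [← hwe]
    exact this
  have c2 : ∀ p : MvPolynomial (Fin n) ℝ, p.totalDegree ≤ d →
      0 ≤ - φ (cf n (2 * d) (p ^ 2)) := by
    intro p hp
    have := nonneg_sq (N := d) (w.toLinearMap ∘ₗ A2) 1
      (fun x hx => hw _ (Or.inl (Or.inl (Or.inr ⟨x, hx, rfl⟩)))) p hp
    rw [one_mul] at this
    rw [← map_neg]
    exact this
  have c3 : ∀ j, ∀ p : MvPolynomial (Fin n) ℝ, p.totalDegree ≤ d - dHalf (g j) →
      0 ≤ - φ (cf n (2 * d) (g j * p ^ 2)) := by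
    intro j p hp
    by_cases hj : g j = 0
    · simp [hj]
    have := nonneg_sq (N := d - dHalf (g j)) (w.toLinearMap ∘ₗ A2) (g j)
      (fun x hx => hw _ (Or.inl (Or.inr (Set.mem_iUnion.2 ⟨⟨j, hj⟩, ⟨x, hx, rfl⟩⟩)))) p hp
    rw [← map_neg]
    exact this
  rcases c4.eq_or_lt with h0 | hpos
  · rw [← h0] at c1 hwf
    have hz : ∀ p : MvPolynomial (Fin n) ℝ, p.totalDegree ≤ d → φ (cf n (2 * d) (p ^ 2)) = 0 := by
      intro p hp
      have a := c1 p hp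
      have b := c2 p hp
      linarith
    have : φ (cf n (2 * d) f) = 0 := by
      rw [← riesz_seqOf φ f hfd]
      apply Finset.sum_eq_zero
      intro α hα
      have hα' : fdeg α ≤ 2 * d := (le_totalDegree hα).trans hfd
      obtain ⟨p, q, hp, hq, hpq⟩ := split_monomial α hα'
      rw [seqOf, if_pos hα', hpq, map_sub, map_sub, hz p hp, hz q hq]
      simp
    rw [this] at hwf
    simp at hwf
  · set ψ : (Idx n (2 * d) → ℝ) →ₗ[ℝ] ℝ := (-lam⁻¹) • φ with hψ
    have hψe : ∀ p : MvPolynomial (Fin n) ℝ, p.totalDegree ≤ 2 * d →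
        riesz (seqOf ψ) p = lam⁻¹ * (-φ (cf n (2 * d) p)) := by
      intro p hp
      rw [riesz_seqOf ψ p hp]
      simp [hψ]
    have hli : 0 < lam⁻¹ := inv_pos.2 hpos
    have hfeas : Feasible g d (seqOf ψ) (fun α => gmom n α - seqOf ψ α) := by
      refine ⟨by simp, fun p hp => ?_, fun p hp => ?_, fun j p hp => ?_⟩
      · rw [hψe _ (IsSOS.sq hp).deg]
        exact mul_nonneg hli.le (c2 p hp)
      · rw [riesz_sub_seq, hψe _ (IsSOS.sq hp).deg]
        have := mul_nonneg hli.le (c1 p hp)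
        have h2 : lam⁻¹ * lam = 1 := inv_mul_cancel₀ hpos.ne'
        linear_combination this + riesz (gmom n) (p ^ 2) * h2
      · rw [hψe _ (loc_deg (hd j) (IsSOS.sq hp).deg rfl)]
        exact mul_nonneg hli.le (c3 j p hp)
    have := hr _ _ hfeas (fun α hα => by simp [seqOf, hα])
    rw [hψe _ hfd, inv_mul_le_iff₀ hpos] at this
    linarith

/-- for the Gaussian measure, `Ω = {x : g_j(x) ≥ 0}` with `Ω` and `ℝⁿ∖Ω` of
nonempty interior, and `f` strictly positive a.e. on `Ω`: for every `d ≥ d₀` the primal SDP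
defining `ō_d(f)` attains its supremum, the dual SDP attains its infimum, and strong duality
holds (`ō_d(f) = ō*_d(f)`): there is a common value `r` which is the greatest element of the
primal value set and the least element of the dual value set. -/
theorem stmt7 {n m : ℕ} (g : Fin m → MvPolynomial (Fin n) ℝ)
    (hΩ : (interior (semialg g)).Nonempty)
    (hΩc : (interior ((semialg g)ᶜ)).Nonempty)
    (f : MvPolynomial (Fin n) ℝ)
    (hf : ∀ᵐ x ∂(gaussianMeasure n).restrict (semialg g), 0 < eval x f)
    (d : ℕ) (hd : ∀ j, dHalf (g j) ≤ d) (hfd : f.totalDegree ≤ 2 * d) :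
    ∃ r : ℝ,
      IsGreatest {r : ℝ | ∃ u v, Feasible g d u v ∧ r = riesz u f} r ∧
      IsLeast {r : ℝ | ∃ p : MvPolynomial (Fin n) ℝ, p.totalDegree ≤ 2 * d ∧
        IsSOS d p ∧ InQM g d (p - f) ∧
        r = ∫ x, eval x p ∂gaussianMeasure n} r := by
  obtain ⟨u, v, huv, hmax⟩ := primal_max g f d
  obtain ⟨p, hp, hq, hle⟩ := dual_exists g hΩ f d hd hfd (riesz u f) hmax
  have heq : riesz u f = ∫ x, eval x p ∂gaussianMeasure n := le_antisymm (weak_duality huv hp hq) hle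
  refine ⟨riesz u f, ⟨⟨u, v, huv, rfl⟩, ?_⟩, ⟨⟨p, hp.deg, hp, hq, heq⟩, ?_⟩⟩
  · rintro _ ⟨u', v', h', rfl⟩
    exact (weak_duality h' hp hq).trans hle
  · rintro _ ⟨p', _, hp', hq', rfl⟩
    exact weak_duality huv hp' hq'
end

section
/- Let μ be the standard Gaussian measure on ℝⁿ, let Ω = {x ∈ ℝⁿ : g_j(x) ≥ 0, j = 1,…,m} be a basic closed semi-algebraic set (not necessarily compact), and let f ∈ ℝ[x] be a polynomial that vanishes on the topological boundary ∂Ω of Ω. For each i ∈ {1,…,n} and α ∈ ℕⁿ, define the polynomial p_{i,α}(x) = ∂(x^α f(x))/∂x_i − x_i · x^α f(x). Then ∫_Ω (∂/∂x_i)(x^α f(x) exp(−‖x‖²/2)) dx = 0, i.e., ∫_Ω p_{i,α} dμ = 0, for every α ∈ ℕⁿ and every i = 1,…,n. -/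
open MeasureTheory MvPolynomial Filter Topology

lemma hasFDerivAt_mvEval {n : ℕ} (p : MvPolynomial (Fin n) ℝ) (x : Fin n → ℝ) :
    HasFDerivAt (fun y : Fin n → ℝ => eval y p)
      (∑ i, eval x (pderiv i p) • (ContinuousLinearMap.proj i : (Fin n → ℝ) →L[ℝ] ℝ)) x := by
  induction p using MvPolynomial.induction_on with
  | C a => simpa using hasFDerivAt_const a x
  | add p q hp hq =>
    simp only [map_add, add_smul, Finset.sum_add_distrib]
    exact hp.add hq
  | mul_X p j hp =>
    have h := hp.mul ((ContinuousLinearMap.proj j : (Fin n → ℝ) →L[ℝ] ℝ).hasFDerivAt (x := x))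
    simp only [map_mul, eval_X]
    refine h.congr_fderiv ?_
    ext v
    simp [Finset.sum_add_distrib, add_mul, Finset.mul_sum, Pi.single_apply, apply_ite]
    apply Finset.sum_congr rfl
    intros; ring

lemma hasFDerivAt_gexp {n : ℕ} (x : Fin n → ℝ) :
    HasFDerivAt (fun y : Fin n → ℝ => Real.exp (-(∑ j, y j ^ 2) / 2))
      (Real.exp (-(∑ j, x j ^ 2) / 2) •
        -∑ i, x i • (ContinuousLinearMap.proj i : (Fin n → ℝ) →L[ℝ] ℝ)) x := by
  have h1 : HasFDerivAt (fun y : Fin n → ℝ => -(∑ j, y j ^ 2) / 2)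
      (-∑ i, x i • (ContinuousLinearMap.proj i : (Fin n → ℝ) →L[ℝ] ℝ)) x := by
    have h := hasFDerivAt_mvEval (C (-1/2 : ℝ) * ∑ j : Fin n, X j ^ 2) x
    have e : (fun y : Fin n → ℝ => -(∑ j, y j ^ 2) / 2)
        = fun y => eval y (C (-1/2 : ℝ) * ∑ j : Fin n, X j ^ 2) := by
      funext y; simp; ring
    rw [e]
    refine h.congr_fderiv ?_
    rw [← Finset.sum_neg_distrib]
    apply Finset.sum_congr rfl
    intro i _
    have hc : eval x (pderiv i (C (-1/2 : ℝ) * ∑ j : Fin n, X j ^ 2)) = -x i := by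
      simp [pderiv_C_mul, Derivation.leibniz_pow, Pi.single_apply, apply_ite]
      ring
    rw [hc]
    ext v
    simp
  exact h1.exp

lemma hasFDerivAt_F {n : ℕ} (P : MvPolynomial (Fin n) ℝ) (x : Fin n → ℝ) :
    ∃ F' : (Fin n → ℝ) →L[ℝ] ℝ,
    HasFDerivAt (fun y : Fin n → ℝ => eval y P * Real.exp (-(∑ j, y j ^ 2) / 2)) F' x ∧
    ∀ i, F' (Pi.single i 1) =
      eval x (pderiv i P - X i * P) * Real.exp (-(∑ j, x j ^ 2) / 2) := by
  refine ⟨_, (hasFDerivAt_mvEval P x).mul (hasFDerivAt_gexp x), ?_⟩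
  intro i
  simp [Pi.single_apply]
  ring

lemma integrable_gpoly {n : ℕ} (P : MvPolynomial (Fin n) ℝ) :
    Integrable (fun y : Fin n → ℝ => eval y P * Real.exp (-(∑ j, y j ^ 2) / 2)) := by
  induction P using MvPolynomial.induction_on' with
  | add p q hp hq =>
    simp only [map_add, add_mul]
    exact hp.add hq
  | monomial u a =>
    have h : Integrable (fun y : Fin n → ℝ =>
        ∏ i, ((fun i (t : ℝ) => t ^ (u i) * Real.exp (-(1/2) * t ^ 2)) i (y i))) := by
      refine Integrable.fintype_prod
        (f := fun i (t : ℝ) => t ^ (u i) * Real.exp (-(1/2) * t ^ 2)) fun i => ?_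
      have := integrable_rpow_mul_exp_neg_mul_sq (b := 1/2) (by norm_num) (s := (u i : ℝ))
        (by have : (0:ℝ) ≤ u i := by positivity
            linarith)
      simpa using this
    refine (h.const_mul a).congr (Eventually.of_forall fun y => ?_)
    simp only [eval_monomial, Finsupp.prod_pow, Finset.prod_mul_distrib, ← Real.exp_sum,
      ← Finset.mul_sum]
    rw [mul_assoc]
    congr 3
    ring_nf

lemma ae_eval_ne_zero : ∀ {n : ℕ} (P : MvPolynomial (Fin n) ℝ), P ≠ 0 →
    ∀ᵐ x : Fin n → ℝ, eval x P ≠ 0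
  | 0, P, hP => by
    refine Eventually.of_forall fun x => ?_
    intro h
    apply hP
    apply MvPolynomial.funext
    intro y
    rw [Subsingleton.elim y x, h]; simp
  | n + 1, P, hP => by
    have hQ : finSuccEquiv ℝ n P ≠ 0 := by simpa using hP
    obtain ⟨k, hk⟩ : ∃ k, (finSuccEquiv ℝ n P).coeff k ≠ 0 := by
      by_contra! h
      exact hQ (Polynomial.ext (by simpa using h))
    have ih := ae_eval_ne_zero _ hk
    have mp := volume_preserving_piFinSuccAbove (fun _ : Fin (n+1) => ℝ) 0
    have key : ∀ᵐ z : ℝ × (Fin n → ℝ), eval (Fin.cons z.1 z.2 : Fin (n+1) → ℝ) P ≠ 0 := by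
      have hm : MeasurableSet {z : ℝ × (Fin n → ℝ) |
          eval (Fin.cons z.1 z.2 : Fin (n+1) → ℝ) P ≠ 0} := by
        have hc : Continuous fun z : ℝ × (Fin n → ℝ) =>
            eval (Fin.cons z.1 z.2 : Fin (n+1) → ℝ) P := by
          refine (MvPolynomial.continuous_eval P).comp ?_
          refine continuous_pi fun j => ?_
          refine Fin.cases ?_ (fun j => ?_) j
          · simpa using continuous_fst
          · simp only [Fin.cons_succ]; fun_prop
        exact (isOpen_ne_fun hc continuous_const).measurableSet
      have hs : ∀ᵐ w : (Fin n → ℝ) × ℝ ∂(volume.prod volume),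
          eval (Fin.cons w.2 w.1 : Fin (n+1) → ℝ) P ≠ 0 := by
        refine (Measure.ae_prod_iff_ae_ae (hm.preimage measurable_swap)).2 ?_
        filter_upwards [ih] with x hx
        have hne : (finSuccEquiv ℝ n P).map (eval x) ≠ 0 := by
          intro h
          apply hx
          rw [← Polynomial.coeff_map, h]; simp
        have : {t : ℝ | ¬ eval (Fin.cons t x : Fin (n+1) → ℝ) P ≠ 0}
            ⊆ ((finSuccEquiv ℝ n P).map (eval x)).rootSet ℝ := by
          intro t ht
          rw [Polynomial.mem_rootSet]
          refine ⟨hne, ?_⟩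
          simp only [ne_eq, not_not, Set.mem_ofPred_eq] at ht
          rw [eval_eq_eval_mv_eval'] at ht
          simpa using ht
        exact measure_mono_null this
          ((Polynomial.rootSet_finite _ _).measure_zero _)
      exact (Measure.measurePreserving_swap (μ := (volume : Measure ℝ))
        (ν := (volume : Measure (Fin n → ℝ)))).quasiMeasurePreserving.ae hs
    have := mp.quasiMeasurePreserving.ae key
    filter_upwards [this] with x hx
    convert hx
    simp [MeasurableEquiv.piFinSuccAbove, Fin.insertNthEquiv]

/-- Smooth cutoff: vanishes to second order at zero and is close to the identity. -/
noncomputable def psi (e t : ℝ) : ℝ := t ^ 3 / (t ^ 2 + e)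

noncomputable def dpsi (e t : ℝ) : ℝ :=
  (3 * t ^ 2 * (t ^ 2 + e) - t ^ 3 * (2 * t)) / (t ^ 2 + e) ^ 2

lemma hasDerivAt_psi {e : ℝ} (he : 0 < e) (t : ℝ) : HasDerivAt (psi e) (dpsi e t) t := by
  have h := (hasDerivAt_pow 3 t).div ((hasDerivAt_pow 2 t).add_const e)
    (by positivity)
  refine h.congr_deriv ?_
  simp [dpsi]

lemma abs_psi_le {e : ℝ} (he : 0 < e) (t : ℝ) : |psi e t| ≤ |t| := by
  have : 0 < t ^ 2 + e := by positivity
  rw [psi, abs_div, abs_of_pos this, div_le_iff₀ this, abs_pow, ← sq_abs t]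
  nlinarith [abs_nonneg t, mul_nonneg (abs_nonneg t) he.le]

lemma abs_dpsi_le {e : ℝ} (he : 0 < e) (t : ℝ) : |dpsi e t| ≤ 3 := by
  have : 0 < t ^ 2 + e := by positivity
  rw [dpsi, abs_div, abs_of_pos (pow_pos this 2), div_le_iff₀ (pow_pos this 2), abs_le]
  have h2 : 0 ≤ t ^ 2 * e := by positivity
  have h4 : 0 ≤ t ^ 4 := by positivity
  constructor <;> nlinarith [sq_nonneg e]

lemma dpsi_tendsto {t : ℝ} (ht : t ≠ 0) :
    Tendsto (fun k : ℕ => dpsi (1 / ((k : ℝ) + 1)) t) atTop (𝓝 1) := by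
  have h : ContinuousAt (fun e => dpsi e t) 0 := by
    unfold dpsi
    apply ContinuousAt.div <;> first | fun_prop | positivity
  have h0 : dpsi 0 t = 1 := by unfold dpsi; field_simp; ring
  have := h.tendsto.comp (tendsto_one_div_add_atTop_nhds_zero_nat (𝕜 := ℝ))
  rwa [h0] at this

lemma continuous_dpsi {e : ℝ} (he : 0 < e) : Continuous (dpsi e) := by
  unfold dpsi
  apply Continuous.div
  · fun_prop
  · fun_prop
  · intro t; positivity

lemma continuous_psi {e : ℝ} (he : 0 < e) : Continuous (psi e) := by
  unfold psi
  apply Continuous.div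
  · fun_prop
  · fun_prop
  · intro t; positivity

lemma hasFDerivAt_indicator {n : ℕ} {S : Set (Fin n → ℝ)} (hS : IsClosed S)
    {F : (Fin n → ℝ) → ℝ} {F' : (Fin n → ℝ) → (Fin n → ℝ) →L[ℝ] ℝ}
    (hF : ∀ x, HasFDerivAt F (F' x) x) (h0 : ∀ x ∈ frontier S, F x = 0)
    {e : ℝ} (he : 0 < e) (x : Fin n → ℝ) :
    HasFDerivAt (S.indicator fun y => psi e (F y))
      (S.indicator (fun y => dpsi e (F y) • F' y) x) x := by
  have hG : HasFDerivAt (fun y => psi e (F y)) (dpsi e (F x) • F' x) x :=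
    (hasDerivAt_psi he (F x)).comp_hasFDerivAt x (hF x)
  by_cases hx : x ∈ S
  · rw [Set.indicator_of_mem hx]
    by_cases hi : x ∈ interior S
    · refine hG.congr_of_eventuallyEq ?_
      filter_upwards [mem_interior_iff_mem_nhds.1 hi] with y hy
      simp [hy]
    · have hz : F x = 0 := h0 x (by rw [hS.frontier_eq]; exact ⟨hx, hi⟩)
      have hd : dpsi e (F x) • F' x = 0 := by simp [hz, dpsi]
      rw [hd] at hG ⊢
      rw [hasFDerivAt_iff_isLittleO] at hG ⊢
      refine Asymptotics.IsBigO.trans_isLittleO (Asymptotics.IsBigO.of_bound 1 ?_) hG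
      refine Eventually.of_forall fun y => ?_
      by_cases hy : y ∈ S
      · simp [hy, hx]
      · simp [hy, hx, hz, psi]
        positivity
  · rw [Set.indicator_of_notMem hx]
    refine (hasFDerivAt_const (0 : ℝ) x).congr_of_eventuallyEq ?_
    filter_upwards [hS.isOpen_compl.mem_nhds hx] with y hy
    rw [Set.indicator_of_notMem hy]

lemma integral_fderiv_zero {n : ℕ} {G : (Fin n → ℝ) → ℝ}
    {G' : (Fin n → ℝ) → (Fin n → ℝ) →L[ℝ] ℝ} (hG : ∀ x, HasFDerivAt G (G' x) x)
    (v : Fin n → ℝ) (hi : Integrable G) (hi' : Integrable fun x => G' x v) :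
    ∫ x, G' x v = 0 := by
  have h := integral_bilinear_hasLineDerivAt_right_eq_neg_left_of_integrable
    (μ := (volume : Measure (Fin n → ℝ))) (f := fun _ => (1 : ℝ)) (f' := fun _ => (0 : ℝ))
    (g := G) (g' := fun x => G' x v) (v := v) (B := ContinuousLinearMap.mul ℝ ℝ)
    (by simp) (by simpa using hi') (by simpa using hi)
    (fun x _ => by simpa using (hasFDerivAt_const (1 : ℝ) x).hasLineDerivAt v)
    (fun x _ => (hG x).hasLineDerivAt v)
  simpa using h

lemma stokes_aux {n : ℕ} {S : Set (Fin n → ℝ)} (hS : IsClosed S)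
    (P : MvPolynomial (Fin n) ℝ) (h0 : ∀ x ∈ frontier S, eval x P = 0) (i : Fin n) :
    ∫ x in S, eval x (pderiv i P - X i * P) * Real.exp (-(∑ j, x j ^ 2) / 2) = 0 := by
  by_cases hP : P = 0
  · simp [hP]
  choose F' hF' hF'i using hasFDerivAt_F P
  set F : (Fin n → ℝ) → ℝ := fun y => eval y P * Real.exp (-(∑ j, y j ^ 2) / 2) with hFdef
  set q : (Fin n → ℝ) → ℝ := fun x =>
    eval x (pderiv i P - X i * P) * Real.exp (-(∑ j, x j ^ 2) / 2) with hq
  have hFi : Integrable F := integrable_gpoly P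
  have hqi : Integrable q := integrable_gpoly _
  have hFc : Continuous F := continuous_iff_continuousAt.2 fun x => (hF' x).continuousAt
  have hF0 : ∀ x ∈ frontier S, F x = 0 := fun x hx => by simp [hFdef, h0 x hx]
  have hdi : ∀ {e : ℝ}, 0 < e → Integrable fun x => dpsi e (F x) * q x := by
    intro e he
    refine (hqi.norm.const_mul 3).mono'
      (((continuous_dpsi he).comp hFc).aestronglyMeasurable.mul hqi.1) ?_
    refine Eventually.of_forall fun x => ?_
    rw [norm_mul]
    exact mul_le_mul_of_nonneg_right (abs_dpsi_le he _) (norm_nonneg _)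
  have hz : ∀ {e : ℝ}, 0 < e → ∫ x in S, dpsi e (F x) * q x = 0 := by
    intro e he
    have hpt : ∀ x, (S.indicator (fun y => dpsi e (F y) • F' y) x) (Pi.single i 1)
        = S.indicator (fun x => dpsi e (F x) * q x) x := by
      intro x
      by_cases hx : x ∈ S
      · simp [hx, hF'i, hq]
      · simp [hx]
    have h := integral_fderiv_zero (hasFDerivAt_indicator hS hF' hF0 he) (Pi.single i 1)
      (by
        refine Integrable.indicator ?_ hS.measurableSet
        refine hFi.norm.mono' ((continuous_psi he).comp hFc).aestronglyMeasurable ?_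
        exact Eventually.of_forall fun x => abs_psi_le he _)
      (by
        simp only [hpt]
        exact (hdi he).indicator hS.measurableSet)
    simp only [hpt] at h
    rwa [integral_indicator hS.measurableSet] at h
  have hpos : ∀ k : ℕ, 0 < 1 / ((k : ℝ) + 1) := fun k => by positivity
  have hlim : Tendsto (fun k : ℕ => ∫ x in S, dpsi (1 / ((k : ℝ) + 1)) (F x) * q x) atTop
      (𝓝 (∫ x in S, q x)) := by
    refine tendsto_integral_of_dominated_convergence (fun x => 3 * ‖q x‖)
      (fun k => (hdi (hpos k)).1.restrict) (hqi.norm.const_mul 3).restrict ?_ ?_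
    · intro k
      refine Eventually.of_forall fun x => ?_
      rw [norm_mul]
      exact mul_le_mul_of_nonneg_right (abs_dpsi_le (hpos k) _) (norm_nonneg _)
    · refine ae_restrict_of_ae ?_
      filter_upwards [ae_eval_ne_zero P hP] with x hx
      have : F x ≠ 0 := mul_ne_zero hx (Real.exp_pos _).ne'
      simpa using (dpsi_tendsto this).mul_const (q x)
  simp only [fun k => hz (hpos k)] at hlim
  exact tendsto_nhds_unique hlim tendsto_const_nhds

/-- Stokes identity for the Gaussian measure on a (possibly non-compact)
basic closed semi-algebraic set `Ω`: if `f` vanishes on `∂Ω` then, for every multi-index `α`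
and coordinate `i`, `∫_Ω ∂/∂x_i (x^α f(x) e^{−‖x‖²/2}) dx = 0`, i.e. `∫_Ω p_{i,α} dμ = 0`
where `p_{i,α} = ∂(x^α f)/∂x_i − x_i x^α f`. -/
theorem stmt13 {n m : ℕ} (g : Fin m → MvPolynomial (Fin n) ℝ)
    (f : MvPolynomial (Fin n) ℝ)
    (hfb : ∀ x ∈ frontier (semialg g), eval x f = 0)
    (i : Fin n) (α : Fin n →₀ ℕ) :
    (∫ x in semialg g,
        fderiv ℝ (fun y : Fin n → ℝ =>
          eval y (monomial α (1 : ℝ) * f) * Real.exp (-(∑ j, y j ^ 2) / 2)) x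
          (Pi.single i 1) ∂volume) = 0 ∧
    (∫ x in semialg g, eval x (pStokesG f i α) ∂gaussianMeasure n) = 0 := by
  have hS : IsClosed (semialg g) := by
    have : semialg g = ⋂ j, {x | 0 ≤ eval x (g j)} := by
      ext x; simp [semialg]
    rw [this]
    exact isClosed_iInter fun j => isClosed_le continuous_const (MvPolynomial.continuous_eval _)
  have h := stokes_aux hS (monomial α (1 : ℝ) * f) (fun x hx => by simp [hfb x hx]) i
  constructor
  · rw [← h]
    congr 1
    funext x
    obtain ⟨F', hF, hFi⟩ := hasFDerivAt_F (monomial α (1 : ℝ) * f) x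
    rw [hF.fderiv, hFi]
  · have hm : Measurable fun x : Fin n → ℝ => ENNReal.ofReal
        ((2 * Real.pi) ^ (-(n : ℝ) / 2) * Real.exp (-(∑ i, x i ^ 2) / 2)) := by
      fun_prop
    rw [gaussianMeasure, setIntegral_withDensity_eq_setIntegral_toReal_smul hm
      (Eventually.of_forall fun x => ENNReal.ofReal_lt_top) _ hS.measurableSet]
    have e : ∀ x : Fin n → ℝ, (ENNReal.ofReal
        ((2 * Real.pi) ^ (-(n : ℝ) / 2) * Real.exp (-(∑ i, x i ^ 2) / 2))).toReal •
        eval x (pStokesG f i α) = (2 * Real.pi) ^ (-(n : ℝ) / 2) *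
        (eval x (pderiv i (monomial α (1 : ℝ) * f) - X i * (monomial α (1 : ℝ) * f)) *
          Real.exp (-(∑ j, x j ^ 2) / 2)) := by
      intro x
      rw [ENNReal.toReal_ofReal (by positivity), smul_eq_mul, pStokesG]
      ring
    simp only [e]
    rw [integral_const_mul, h, mul_zero]
end

section
/- Let μ be the exponential measure on ℝⁿ, let Ω = {x ∈ ℝⁿ : g_j(x) ≥ 0, j = 1,…,m+n} ⊆ ℝⁿ₊ be a basic closed semi-algebraic set contained in the positive orthant, where g_{m+i}(x) = x_i for i = 1,…,n (Ω not necessarily compact), and let f ∈ ℝ[x] be a polynomial that vanishes on the topological boundary ∂Ω of Ω. For each i ∈ {1,…,n} and α ∈ ℕⁿ, define p_{i,α}(x) = ∂(x^α f(x))/∂x_i − x^α f(x). Then ∫_Ω (∂/∂x_i)(x^α f(x) exp(−(x_1+⋯+x_n))) dx = 0, i.e., ∫_Ω p_{i,α} dμ = 0, for every α ∈ ℕⁿ and every i = 1,…,n. -/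
open MeasureTheory MvPolynomial Filter Topology

/-- the basic closed semi-algebraic set `{x : g_j(x) ≥ 0, j = 1,…,m+n}` where the last `n`
polynomials are the coordinates `g_{m+i}(x) = x_i`; it is contained in the positive orthant. -/
def semialgPos {n m : ℕ} (g : Fin m → MvPolynomial (Fin n) ℝ) : Set (Fin n → ℝ) :=
  {x | (∀ j, 0 ≤ eval x (g j)) ∧ ∀ i, 0 ≤ x i}

/-! Helper lemmas -/

/-- One-dimensional fundamental theorem of calculus on a closed set with countable frontier. -/
theorem aux_oneDim (F F' : ℝ → ℝ) (hF : ∀ t, HasDerivAt F (F' t) t)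
    (hFi : IntegrableOn F (Set.Ioi 0)) (hFi' : IntegrableOn F' (Set.Ioi 0))
    (S : Set ℝ) (hS : IsClosed S) (hS0 : S ⊆ Set.Ici 0) (hc : (frontier S).Countable)
    (hz : ∀ t ∈ frontier S, F t = 0) : ∫ t, S.indicator F' t = 0 := by
  have hcont : Continuous F := continuous_iff_continuousAt.2 fun t => (hF t).continuousAt
  have hh : Continuous (S.indicator F) := by
    refine continuous_indicator hz hcont.continuousOn
  have hFiS : IntegrableOn F' S := by
    refine IntegrableOn.mono_set ?_ hS0
    rwa [integrableOn_Ici_iff_integrableOn_Ioi]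
  have hint : Integrable (S.indicator F') := (integrable_indicator_iff hS.measurableSet).2 hFiS
  have hd : ∀ t, t ∉ frontier S → HasDerivAt (S.indicator F) (S.indicator F' t) t := by
    intro t ht
    by_cases hts : t ∈ S
    · have hin : t ∈ interior S := by
        by_contra h
        exact ht ⟨subset_closure hts, h⟩
      rw [Set.indicator_of_mem hts]
      refine (hF t).congr_of_eventuallyEq ?_
      filter_upwards [mem_interior_iff_mem_nhds.1 hin] with s hs
      exact Set.indicator_of_mem hs _
    · rw [Set.indicator_of_notMem hts]
      refine (hasDerivAt_const t (0:ℝ)).congr_of_eventuallyEq ?_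
      filter_upwards [hS.isOpen_compl.mem_nhds hts] with s hs
      exact Set.indicator_of_notMem hs _
  have hneg : ∀ t < 0, t ∉ S := fun t ht h => absurd (hS0 h) (by simpa using ht)
  have key : ∀ b : ℝ, ∫ t in (-1)..b, S.indicator F' t = S.indicator F b := by
    intro b
    rw [MeasureTheory.integral_eq_of_hasDerivAt_off_countable (S.indicator F) (S.indicator F') hc
      hh.continuousOn (fun x hx => hd x hx.2) hint.intervalIntegrable,
      Set.indicator_of_notMem (hneg (-1) (by norm_num)), sub_zero]
  have hF0 : Tendsto F atTop (𝓝 0) :=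
    tendsto_zero_of_hasDerivAt_of_integrableOn_Ioi (fun t _ => hF t) hFi' hFi
  have hh0 : Tendsto (S.indicator F) atTop (𝓝 0) := by
    refine squeeze_zero_norm (fun t => ?_) (tendsto_zero_iff_norm_tendsto_zero.1 hF0)
    exact norm_indicator_le_norm_self _ _
  have hlim := intervalIntegral_tendsto_integral_Ioi (-1) hint.integrableOn
    (tendsto_id : Tendsto (id : ℝ → ℝ) atTop atTop)
  simp only [id, key] at hlim
  have := tendsto_nhds_unique hlim hh0
  rw [← this, setIntegral_eq_integral_of_forall_compl_eq_zero]
  intro t ht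
  refine Set.indicator_of_notMem (hneg t ?_) _
  simp at ht
  linarith

theorem aux_oneDim_int (k : ℕ) : IntegrableOn (fun t : ℝ => t ^ k * Real.exp (-t)) (Set.Ici 0) := by
  rw [integrableOn_Ici_iff_integrableOn_Ioi]
  have := Real.GammaIntegral_convergent (s := k + 1) (by positivity)
  refine this.congr_fun (fun t ht => ?_) measurableSet_Ioi
  simp [mul_comm]

theorem aux_int {n : ℕ} (Q : MvPolynomial (Fin n) ℝ) :
    IntegrableOn (fun x : Fin n → ℝ => eval x Q * Real.exp (-(∑ j, x j))) {x | ∀ i, 0 ≤ x i} := by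
  have hset : {x : Fin n → ℝ | ∀ i, 0 ≤ x i} = Set.univ.pi fun _ => Set.Ici (0:ℝ) := by
    ext x; simp [Pi.le_def]
  induction Q using MvPolynomial.induction_on' with
  | add p q hp hq =>
    refine (hp.add hq).congr (Eventually.of_forall fun x => ?_)
    simp [add_mul]
  | monomial u a =>
    have h := (Integrable.fintype_prod (μ := fun _ : Fin n => volume.restrict (Set.Ici (0:ℝ)))
      (f := fun j (t : ℝ) => t ^ (u j) * Real.exp (-t)) (fun j => aux_oneDim_int (u j)))
    rw [← Measure.restrict_pi_pi, ← volume_pi, ← hset] at h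
    refine (h.const_mul a).congr (Eventually.of_forall fun x => ?_)
    simp only [eval_monomial, Finset.prod_mul_distrib, ← Real.exp_sum, Finset.sum_neg_distrib]
    rw [Finsupp.prod_fintype _ _ (by simp)]
    ring

theorem aux_hasDerivAt_poly {n : ℕ} (P : MvPolynomial (Fin n) ℝ) (i : Fin n) (x : Fin n → ℝ)
    (t : ℝ) : HasDerivAt (fun t => eval (Function.update x i t) P)
      (eval (Function.update x i t) (pderiv i P)) t := by
  induction P using MvPolynomial.induction_on with
  | C a => simpa using hasDerivAt_const t a
  | add p q hp hq => simpa using hp.fun_add hq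
  | mul_X p j hp =>
    have hX : HasDerivAt (fun t => Function.update x i t j) (Pi.single (M := fun _ => ℝ) i 1 j) t :=
      hasDerivAt_pi.1 (hasDerivAt_update x i t) j
    have h := hp.fun_mul hX
    simp only [Derivation.leibniz, pderiv_X, smul_eq_mul, map_add, map_mul, eval_X]
    refine h.congr_deriv ?_
    · by_cases hij : j = i
      · subst hij; simp; ring
      · simp [Pi.single_apply, hij, Ne.symm hij]; ring

theorem aux_hasDerivAt {n : ℕ} (P : MvPolynomial (Fin n) ℝ) (i : Fin n) (x : Fin n → ℝ)
    (t : ℝ) : HasDerivAt (fun t => eval (Function.update x i t) P *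
        Real.exp (-(∑ j, Function.update x i t j)))
      (eval (Function.update x i t) (pderiv i P - P) *
        Real.exp (-(∑ j, Function.update x i t j))) t := by
  have hs : HasDerivAt (fun t => ∑ j, Function.update x i t j) 1 t := by
    have : HasDerivAt (fun t => ∑ j, Function.update x i t j)
        (∑ j, Pi.single (M := fun _ => ℝ) i 1 j) t :=
      HasDerivAt.fun_sum fun j _ => hasDerivAt_pi.1 (hasDerivAt_update x i t) j
    simpa using this
  have h := (aux_hasDerivAt_poly P i x t).fun_mul hs.fun_neg.exp
  refine h.congr_deriv ?_
  simp; ring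

theorem aux_fderiv {n : ℕ} (P : MvPolynomial (Fin n) ℝ) (i : Fin n) (x : Fin n → ℝ) :
    fderiv ℝ (fun y : Fin n → ℝ => eval y P * Real.exp (-(∑ j, y j))) x (Pi.single i 1)
      = eval x (pderiv i P - P) * Real.exp (-(∑ j, x j)) := by
  have hd : DifferentiableAt ℝ (fun y : Fin n → ℝ => eval y P * Real.exp (-(∑ j, y j))) x := by
    refine DifferentiableAt.mul ?_ (by fun_prop)
    exact (AnalyticOnNhd.eval_mvPolynomial P x (Set.mem_univ x)).differentiableAt
  have h1 := aux_hasDerivAt P i x (x i)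
  have hd' : HasFDerivAt (fun y : Fin n → ℝ => eval y P * Real.exp (-(∑ j, y j)))
    (fderiv ℝ (fun y : Fin n → ℝ => eval y P * Real.exp (-(∑ j, y j))) x)
      (Function.update x i (x i)) := by
    rw [Function.update_eq_self]; exact hd.hasFDerivAt
  have h2 := hd'.comp_hasDerivAt (x i) (hasDerivAt_update x i (x i))
  have h3 := h2.unique h1
  rwa [Function.update_eq_self] at h3

theorem aux_closed {n m : ℕ} (g : Fin m → MvPolynomial (Fin n) ℝ) : IsClosed (semialgPos g) := by
  have : semialgPos g = (⋂ j, {x | 0 ≤ eval x (g j)}) ∩ ⋂ i, {x | 0 ≤ x i} := by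
    ext x; simp [semialgPos]
  rw [this]
  refine (isClosed_iInter fun j => ?_).inter (isClosed_iInter fun i => ?_)
  · exact isClosed_le continuous_const (MvPolynomial.continuous_eval _)
  · exact isClosed_le continuous_const (continuous_apply i)

/-- restriction of a polynomial to a line is a univariate polynomial -/
theorem aux_slice {n : ℕ} (P : MvPolynomial (Fin n) ℝ) (i : Fin n) (x : Fin n → ℝ) :
    ∃ q : Polynomial ℝ, ∀ t, q.eval t = eval (Function.update x i t) P := by
  induction P using MvPolynomial.induction_on with
  | C a => exact ⟨Polynomial.C a, by simp⟩
  | add p q hp hq =>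
    obtain ⟨a, ha⟩ := hp
    obtain ⟨b, hb⟩ := hq
    exact ⟨a + b, by simp [ha, hb]⟩
  | mul_X p j hp =>
    obtain ⟨a, ha⟩ := hp
    by_cases hij : j = i
    · subst hij
      exact ⟨a * Polynomial.X, by simp [ha]⟩
    · exact ⟨a * Polynomial.C (x j), by simp [ha, hij]⟩

theorem aux_countable {n m : ℕ} (g : Fin m → MvPolynomial (Fin n) ℝ) (i : Fin n)
    (x : Fin n → ℝ) :
    (frontier ((fun t => Function.update x i t) ⁻¹' semialgPos g)).Countable := by
  choose q hq using fun j => aux_slice (g j) i x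
  have hcont : Continuous (fun t : ℝ => Function.update x i t) :=
    continuous_const.update i continuous_id
  refine Set.Finite.countable (Set.Finite.subset (s := {0} ∪ ⋃ j, {t | t ∈ (q j).roots})
    ?_ ?_)
  · refine (Set.finite_singleton 0).union (Set.finite_iUnion fun j => ?_)
    exact (Multiset.finite_toSet (q j).roots)
  · intro t ht
    by_contra hn
    simp only [Set.mem_union, Set.mem_singleton_iff, Set.mem_iUnion, Set.mem_ofPred_eq,
      not_or, not_exists] at hn
    have htS : t ∈ (fun t => Function.update x i t) ⁻¹' semialgPos g :=
      ((aux_closed g).preimage hcont).frontier_subset ht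
    refine ht.2 (mem_interior_iff_mem_nhds.2 ?_)
    have h1 : ∀ j, ∀ᶠ s in 𝓝 t, 0 ≤ eval (Function.update x i s) (g j) := by
      intro j
      by_cases hj : q j = 0
      · exact Eventually.of_forall fun s => by rw [← hq, hj]; simp
      · have h0 : (q j).eval t ≠ 0 := fun h => hn.2 j ((Polynomial.mem_roots hj).2 h)
        have h00 : 0 ≤ (q j).eval t := by rw [hq]; exact htS.1 j
        have hpos : 0 < (q j).eval t := lt_of_le_of_ne h00 (Ne.symm h0)
        filter_upwards [(q j).continuous.continuousAt.eventually_const_lt hpos] with s hs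
        rw [← hq]; exact hs.le
    have ht0 : 0 < t := lt_of_le_of_ne (by simpa using htS.2 i) (Ne.symm hn.1)
    filter_upwards [eventually_all.2 h1, eventually_gt_nhds ht0] with s hs hs0
    refine ⟨hs, fun k => ?_⟩
    by_cases hk : k = i
    · subst hk; simpa using hs0.le
    · simpa [hk] using htS.2 k

theorem aux_main {n m : ℕ} (g : Fin m → MvPolynomial (Fin n) ℝ)
    (P : MvPolynomial (Fin n) ℝ)
    (hfb : ∀ x ∈ frontier (semialgPos g), eval x P = 0) (i : Fin n) :
    ∫ x in semialgPos g, eval x (pderiv i P - P) * Real.exp (-(∑ j, x j)) = 0 := by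
  obtain _ | n := n
  · exact i.elim0
  set D : (Fin (n+1) → ℝ) → ℝ := fun x => eval x (pderiv i P - P) * Real.exp (-(∑ j, x j)) with hD
  set F : (Fin (n+1) → ℝ) → ℝ := fun x => eval x P * Real.exp (-(∑ j, x j)) with hFdef
  set O : Set (Fin (n+1) → ℝ) := {x | ∀ i, 0 ≤ x i} with hO
  have hOm : MeasurableSet O := by
    have : O = ⋂ i, {x | 0 ≤ x i} := by ext x; simp [hO]
    rw [this]
    exact MeasurableSet.iInter fun j => measurableSet_le measurable_const (measurable_pi_apply j)
  have hΩm := (aux_closed g).measurableSet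
  have hΩO : semialgPos g ⊆ O := fun x hx => hx.2
  have hDi : Integrable (O.indicator D) := (integrable_indicator_iff hOm).2 (aux_int _)
  have hFi : Integrable (O.indicator F) := (integrable_indicator_iff hOm).2 (aux_int _)
  have hDΩ : Integrable ((semialgPos g).indicator D) :=
    (integrable_indicator_iff hΩm).2 ((aux_int _).mono_set hΩO)
  have hmp := (volume_preserving_piFinSuccAbove (fun _ : Fin (n+1) => ℝ) i).symm
  have hemb := (MeasurableEquiv.piFinSuccAbove (fun _ : Fin (n+1) => ℝ) i).symm.measurableEmbedding
  have hDi' := (hmp.integrable_comp_emb hemb).2 hDi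
  have hFi' := (hmp.integrable_comp_emb hemb).2 hFi
  have hDΩ' := (hmp.integrable_comp_emb hemb).2 hDΩ
  change ∫ x in semialgPos g, D x = 0
  rw [← integral_indicator hΩm, ← hmp.integral_comp hemb]
  rw [Measure.volume_eq_prod] at *
  rw [show (∫ z, (semialgPos g).indicator D ((MeasurableEquiv.piFinSuccAbove
    (fun _ : Fin (n+1) => ℝ) i).symm z) ∂(volume.prod volume)) = _ from
    integral_prod_symm _ hDΩ']
  refine integral_eq_zero_of_ae ?_
  filter_upwards [hDi'.prod_left_ae, hFi'.prod_left_ae] with y hy1 hy2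
  have hup : ∀ t, (MeasurableEquiv.piFinSuccAbove (fun _ : Fin (n+1) => ℝ) i).symm (t, y)
      = Function.update (i.insertNth 0 y : Fin (n+1) → ℝ) i t := by
    intro t
    rw [Fin.update_insertNth]; rfl
  set x : Fin (n+1) → ℝ := i.insertNth 0 y with hx
  simp only [Function.comp_def, hup] at hy1 hy2 ⊢
  have hcont : Continuous (fun t : ℝ => Function.update x i t) :=
    continuous_const.update i continuous_id
  by_cases hy : ∀ k, 0 ≤ x k
  · have hmem : ∀ t ∈ Set.Ioi (0:ℝ), Function.update x i t ∈ O := by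
      intro t ht k
      by_cases hk : k = i
      · subst hk; simpa using ht.le
      · simpa [hk] using hy k
    refine aux_oneDim (fun t => F (Function.update x i t)) (fun t => D (Function.update x i t))
      (fun t => aux_hasDerivAt P i x t) ?_ ?_ ((fun t => Function.update x i t) ⁻¹' semialgPos g)
      ((aux_closed g).preimage hcont) ?_ (aux_countable g i x) ?_
    · refine hy2.integrableOn.congr_fun (fun t ht => ?_) measurableSet_Ioi
      exact Set.indicator_of_mem (hmem t ht) _
    · refine hy1.integrableOn.congr_fun (fun t ht => ?_) measurableSet_Ioi
      exact Set.indicator_of_mem (hmem t ht) _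
    · intro t ht
      simpa using ht.2 i
    · intro t ht
      have := hfb _ (hcont.frontier_preimage_subset _ ht)
      simp [hFdef, this]
  · push Not at hy
    obtain ⟨k, hk⟩ := hy
    have hki : k ≠ i := by
      rintro rfl
      simp [hx] at hk
    have : ∀ t, (semialgPos g).indicator D (Function.update x i t) = 0 := by
      intro t
      refine Set.indicator_of_notMem (fun h => ?_) _
      have := h.2 k
      simp [hki] at this
      linarith
    simp [this]

/-- Stokes identity for the exponential measure on a (possibly non-compact)
basic closed semi-algebraic set `Ω ⊆ ℝⁿ₊` (defined by `g_1,…,g_m` and `g_{m+i}(x)=x_i`):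
if `f` vanishes on `∂Ω` then, for every multi-index `α` and coordinate `i`,
`∫_Ω ∂/∂x_i (x^α f(x) e^{−(x_1+⋯+x_n)}) dx = 0`, i.e. `∫_Ω p_{i,α} dμ = 0`
where `p_{i,α} = ∂(x^α f)/∂x_i − x^α f`. -/
theorem stmt14 {n m : ℕ} (g : Fin m → MvPolynomial (Fin n) ℝ)
    (f : MvPolynomial (Fin n) ℝ)
    (hfb : ∀ x ∈ frontier (semialgPos g), eval x f = 0)
    (i : Fin n) (α : Fin n →₀ ℕ) :
    (∫ x in semialgPos g,
        fderiv ℝ (fun y : Fin n → ℝ =>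
          eval y (monomial α (1 : ℝ) * f) * Real.exp (-(∑ j, y j))) x
          (Pi.single i 1) ∂volume) = 0 ∧
    (∫ x in semialgPos g, eval x (pStokesE f i α) ∂expMeasure n) = 0 := by
  have hP : ∀ x ∈ frontier (semialgPos g), eval x (monomial α (1 : ℝ) * f) = 0 := by
    intro x hx
    rw [map_mul, hfb x hx, mul_zero]
  have h := aux_main g (monomial α (1 : ℝ) * f) hP i
  refine ⟨by simpa only [aux_fderiv] using h, ?_⟩
  have hΩm := (aux_closed g).measurableSet
  rw [expMeasure, setIntegral_withDensity_eq_setIntegral_toReal_smul (by fun_prop) (by simp) _ hΩm,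
    Measure.restrict_restrict_of_subset (fun x hx => hx.2), ← h]
  refine integral_congr_ae (Eventually.of_forall fun x => ?_)
  simp only [pStokesE, smul_eq_mul]
  rw [ENNReal.toReal_ofReal (Real.exp_pos _).le, mul_comm]
end
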